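/- arXiv:2504.07225 — 5 statements merged into one kernel-verified Lean document; each statement's English description precedes it below -/
import Mathlib

section
/- Let K ∈ ℤ_{≥0} ∪ {∞}, let U ⊆ ℝ^N be open, μ0 ∈ U, and let a, b, η, λ ∈ C^K(U) satisfy b(μ) > 0 and λ(μ) > 0 for every μ ∈ U; set λ^0 = λ(μ0). If L ∈ (λ^0, 2λ^0), then for every ψ ∈ 𝓕^K_L(μ0) there exists φ ∈ 𝓕^K_L(μ0) such that, for all μ in a neighborhood of μ0 and all s > 0 small enough that |a(μ)·s^{λ(μ)}/b(μ)| < 1, one has (b(μ) + a(μ)·s^{λ(μ)} + ψ(s;μ))^{η(μ)} = b(μ)^{η(μ)} + η(μ)·b(μ)^{η(μ)−1}·a(μ)·s^{λ(μ)} + φ(s;μ). -/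
/-!
Put `u = a s^λ` and `v = (u + ψ) / b`, so that `b + u + ψ = b (1 + v)` and the remainder is
`φ = b^η ((1 + v)^η - 1 - η v) + η b^(η-1) ψ`.
Since `s^λ` is flat of every order below `λ(μ0)` and `L / 2 < λ(μ0)`, the function `v` is flat of
order `L / 2`. An analytic function vanishing to second order at `0` therefore turns `v` into a
function flat of order `L`. With `w = η log (1 + v)`,
`(1 + v)^η - 1 - η v = (exp w - 1 - w) + η (log (1 + v) - v)`
is a combination of two such functions.

Flatness with derivatives taken in any order (`Flat`) suits induction on the number of
derivatives; by the symmetry of second derivatives it amounts to the bounds in `MemF`. Since the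
base `b + u + ψ` may vanish away from `μ0`, the remainder is multiplied by a smooth cutoff in `μ`.
-/

open Topology Filter Set

/-- Partial derivative with respect to `s`. -/
noncomputable def dS {N : ℕ} (ψ : ℝ → (Fin N → ℝ) → ℝ) : ℝ → (Fin N → ℝ) → ℝ :=
  fun s μ => deriv (fun t => ψ t μ) s

/-- Partial derivative with respect to the `i`-th component of `μ`. -/
noncomputable def dMu {N : ℕ} (i : Fin N) (ψ : ℝ → (Fin N → ℝ) → ℝ) : ℝ → (Fin N → ℝ) → ℝ :=
  fun s μ => fderiv ℝ (fun m => ψ s m) μ (Pi.single i 1)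

/-- Mixed partial derivative `∂^{|ν|}ψ/(∂s^{ν0} ∂μ1^{ν1} ⋯ ∂μN^{νN})`. -/
noncomputable def mixedDeriv {N : ℕ} (ν0 : ℕ) (ν : Fin N → ℕ) (ψ : ℝ → (Fin N → ℝ) → ℝ) :
    ℝ → (Fin N → ℝ) → ℝ :=
  (dS (N := N))^[ν0] ((List.finRange N).foldr (fun i φ => (dMu i)^[ν i] φ) ψ)

/-- ψ ∈ 𝓕^K_L(μ0): the class of (L,K)-flat functions with respect to s at μ0. -/
def MemF {N : ℕ} (K : ℕ∞) (L : ℝ) (U : Set (Fin N → ℝ)) (μ0 : Fin N → ℝ)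
    (ψ : ℝ → (Fin N → ℝ) → ℝ) : Prop :=
  (∃ ε > 0, ContDiffOn ℝ K (fun p : ℝ × (Fin N → ℝ) => ψ p.1 p.2) ((Set.Ioo 0 ε) ×ˢ U)) ∧
  ∀ ν0 : ℕ, ∀ ν : Fin N → ℕ, (↑(ν0 + ∑ i, ν i) : ℕ∞) ≤ K →
    ∃ V ⊆ U, V ∈ 𝓝 μ0 ∧ ∃ C > 0, ∃ s0 > 0, ∀ μ ∈ V, ∀ s ∈ Set.Ioo (0:ℝ) s0,
      |mixedDeriv ν0 ν ψ s μ| ≤ C * s ^ (L - (ν0 : ℝ))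

/-- ψ ∈ 𝓕^K_L(W) = ⋂_{μ0 ∈ W} 𝓕^K_L(μ0). -/
def MemFSet {N : ℕ} (K : ℕ∞) (L : ℝ) (U : Set (Fin N → ℝ)) (W : Set (Fin N → ℝ))
    (ψ : ℝ → (Fin N → ℝ) → ℝ) : Prop :=
  ∀ μ0 ∈ W, MemF K L U μ0 ψ

/-- The Écalle–Roussarie compensator. -/
noncomputable def omegaComp (s α : ℝ) : ℝ :=
  if α = 0 then -Real.log s else (s ^ (-α) - 1) / α

/-- `Λ_{i,k}(μ) = ∏_{j=i+1}^{k} λ_j(μ)` (1-based), here with 0-based index family. -/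
noncomputable def LamProd {N n : ℕ} (lam : Fin n → (Fin N → ℝ) → ℝ) (i k : ℕ)
    (μ : Fin N → ℝ) : ℝ :=
  ∏ j ∈ Finset.univ.filter (fun j : Fin n => i ≤ (j : ℕ) ∧ (j : ℕ) < k), lam j μ

/-- `A_{a+1,k}(μ) = ∏_{i=a+1}^{k} Δ_i(μ)^{Λ_{i,k}(μ)}` (1-based), 0-based lower bound `a`. -/
noncomputable def Acoef {N n : ℕ} (lam Δ : Fin n → (Fin N → ℝ) → ℝ) (a k : ℕ)
    (μ : Fin N → ℝ) : ℝ :=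
  ∏ i ∈ Finset.univ.filter (fun i : Fin n => a ≤ (i : ℕ) ∧ (i : ℕ) < k),
    (Δ i μ) ^ (LamProd lam ((i : ℕ) + 1) k μ)

/-- Composition `D_n ∘ ⋯ ∘ D_1` (0-based: `D (n-1) ∘ ⋯ ∘ D 0`). -/
noncomputable def iterComp {N n : ℕ} (D : Fin n → ℝ → (Fin N → ℝ) → ℝ) :
    ℝ → (Fin N → ℝ) → ℝ :=
  fun s μ => (List.finRange n).foldl (fun t i => D i t μ) s

open Asymptotics

section Approach

variable {E : Type*} [TopologicalSpace E] {μ0 : E}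

/-- The filter along which flatness is measured: `s → 0⁺` and `μ → μ0`, independently. -/
def approach (μ0 : E) : Filter (ℝ × E) := 𝓝[>] 0 ×ˢ 𝓝 μ0

theorem approach_basis (μ0 : E) : (approach μ0).HasBasis
    (fun i : ℝ × Set E => 0 < i.1 ∧ i.2 ∈ 𝓝 μ0) fun i => Ioo 0 i.1 ×ˢ i.2 :=
  (nhdsGT_basis 0).prod (𝓝 μ0).basis_sets

theorem eventually_eventually_nhds_of_approach {P : ℝ × E → Prop}
    (h : ∀ᶠ p in approach μ0, P p) : ∀ᶠ p in approach μ0, ∀ᶠ q in 𝓝 p, P q := by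
  have hopen : IsOpen (Ioi (0 : ℝ) ×ˢ (univ : Set E)) := isOpen_Ioi.prod isOpen_univ
  have happroach : approach μ0 = 𝓝[Ioi (0 : ℝ) ×ˢ univ] (0, μ0) := by
    rw [nhdsWithin_prod_eq, nhdsWithin_univ, approach]
  rw [happroach] at h ⊢
  filter_upwards [eventually_eventually_nhdsWithin.2 h, self_mem_nhdsWithin] with p hp hmem
  rwa [hopen.nhdsWithin_eq hmem] at hp

theorem eventually_approach_fst {P : ℝ → Prop} (h : ∀ᶠ s in 𝓝[>] 0, P s) :
    ∀ᶠ p in approach μ0, P p.1 :=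
  tendsto_fst.eventually h

theorem eventually_approach_snd {P : E → Prop} (h : ∀ᶠ μ in 𝓝 μ0, P μ) :
    ∀ᶠ p in approach μ0, P p.2 :=
  tendsto_snd.eventually h

theorem approach_pos : ∀ᶠ p in approach μ0, 0 < p.1 :=
  eventually_approach_fst self_mem_nhdsWithin

theorem rpow_isBigO_rpow_of_eventually_le {e : E → ℝ} {M : ℝ} (h : ∀ᶠ μ in 𝓝 μ0, M ≤ e μ) :
    (fun p : ℝ × E => p.1 ^ e p.2) =O[approach μ0] fun p => p.1 ^ M := by
  refine IsBigO.of_bound 1 ?_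
  filter_upwards [eventually_approach_fst (Ioo_mem_nhdsGT one_pos), eventually_approach_snd h]
    with p ⟨h0, h1⟩ hle
  rw [one_mul, Real.norm_of_nonneg (by positivity), Real.norm_of_nonneg (by positivity)]
  exact Real.rpow_le_rpow_of_exponent_ge h0 h1.le hle

theorem isBigO_mul_rpow {f g : ℝ × E → ℝ} {L M : ℝ} (hf : f =O[approach μ0] fun p => p.1 ^ L)
    (hg : g =O[approach μ0] fun p => p.1 ^ M) :
    (fun p => f p * g p) =O[approach μ0] fun p => p.1 ^ (L + M) :=
  (hf.mul hg).congr' .rfl (approach_pos.mono fun _ hp => (Real.rpow_add hp L M).symm)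

theorem isBigO_rpow_zero_of_tendsto {f : ℝ × E → ℝ} {c : ℝ}
    (h : Tendsto f (approach μ0) (𝓝 c)) : f =O[approach μ0] fun p => p.1 ^ (0 : ℝ) := by
  simpa only [Real.rpow_zero] using h.isBigO_one ℝ

theorem isBigO_approach_iff {U : Set E} (hU : U ∈ 𝓝 μ0) {f : ℝ → E → ℝ} {c : ℝ} :
    ((fun p : ℝ × E => f p.1 p.2) =O[approach μ0] fun p => p.1 ^ c) ↔
      ∃ V ⊆ U, V ∈ 𝓝 μ0 ∧ ∃ C > 0, ∃ s0 > 0, ∀ μ ∈ V, ∀ s ∈ Ioo (0 : ℝ) s0,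
        |f s μ| ≤ C * s ^ c := by
  have hnorm {s : ℝ} (hs : 0 < s) : ‖s ^ c‖ = s ^ c :=
    Real.norm_of_nonneg (Real.rpow_nonneg hs.le c)
  constructor
  · intro h
    obtain ⟨C, hC, h⟩ := h.exists_pos
    obtain ⟨⟨s0, V⟩, ⟨hs0, hV⟩, hbox⟩ := (approach_basis μ0).eventually_iff.1 h.bound
    refine ⟨V ∩ U, inter_subset_right, inter_mem hV hU, C, hC, s0, hs0, fun μ hμ s hs => ?_⟩
    simpa only [Real.norm_eq_abs, hnorm hs.1] using hbox (mk_mem_prod hs hμ.1)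
  · rintro ⟨V, -, hV, C, -, s0, hs0, hbound⟩
    refine IsBigO.of_bound C ((approach_basis μ0).eventually_iff.2 ⟨(s0, V), ⟨hs0, hV⟩, ?_⟩)
    rintro ⟨s, μ⟩ ⟨hs, hμ⟩
    simpa only [Real.norm_eq_abs, hnorm hs.1] using hbound μ hμ s hs

end Approach

section PartialDerivatives

variable {N : ℕ} {μ0 : Fin N → ℝ} {f g : ℝ × (Fin N → ℝ) → ℝ} {p : ℝ × (Fin N → ℝ)}

/-- The coordinate directions of `ℝ × ℝ^N`: `none` stands for `s`, `some i` for `μ_i`. -/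
def coordVec : Option (Fin N) → ℝ × (Fin N → ℝ)
  | none => (1, 0)
  | some i => (0, Pi.single i 1)

/-- The partial derivative of a function of the pair `(s, μ)` in a coordinate direction, read off
the total derivative so that the symmetry of second derivatives applies. -/
noncomputable def pd (j : Option (Fin N)) (f : ℝ × (Fin N → ℝ) → ℝ) : ℝ × (Fin N → ℝ) → ℝ :=
  fun p => fderiv ℝ f p (coordVec j)

theorem pd_congr (h : f =ᶠ[approach μ0] g) (j : Option (Fin N)) :
    pd j f =ᶠ[approach μ0] pd j g := by
  filter_upwards [eventually_eventually_nhds_of_approach h] with p hp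
  rw [pd, pd, EventuallyEq.fderiv_eq hp]

theorem foldr_pd_congr (h : f =ᶠ[approach μ0] g) (l : List (Option (Fin N))) :
    l.foldr pd f =ᶠ[approach μ0] l.foldr pd g := by
  induction l with
  | nil => exact h
  | cons j l ih => exact pd_congr ih j

theorem contDiffAt_pd {m n : ℕ} (h : ContDiffAt ℝ n f p) (hm : m + 1 ≤ n)
    (j : Option (Fin N)) : ContDiffAt ℝ m (pd j f) p :=
  (h.fderiv_right (m := m) (by exact_mod_cast hm)).clm_apply contDiffAt_const

theorem contDiffAt_foldr_pd {m n : ℕ} (h : ContDiffAt ℝ n f p) (l : List (Option (Fin N)))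
    (hm : m + l.length ≤ n) : ContDiffAt ℝ m (l.foldr pd f) p := by
  induction l generalizing m with
  | nil => exact h.of_le (by exact_mod_cast hm)
  | cons j l ih => exact contDiffAt_pd (ih (by grind)) le_rfl j

theorem pd_comm (h : ContDiffAt ℝ 2 f p) (i j : Option (Fin N)) :
    pd i (pd j f) p = pd j (pd i f) p := by
  have hd : DifferentiableAt ℝ (fderiv ℝ f) p :=
    (h.fderiv_right (m := 1) (by norm_num)).differentiableAt one_ne_zero
  have pd_pd (i j : Option (Fin N)) :
      pd i (pd j f) p = fderiv ℝ (fderiv ℝ f) p (coordVec i) (coordVec j) := by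
    have hpd := (hd.hasFDerivAt.clm_apply (hasFDerivAt_const (coordVec j) p)).fderiv
    rw [pd]
    unfold pd
    rw [hpd]
    simp
  rw [pd_pd, pd_pd]
  exact h.isSymmSndFDerivAt (by simp) _ _

theorem foldr_pd_perm {n : ℕ} (h : ∀ᶠ p in approach μ0, ContDiffAt ℝ n f p)
    {l l' : List (Option (Fin N))} (hl : l.Perm l') (hn : l.length ≤ n) :
    l.foldr pd f =ᶠ[approach μ0] l'.foldr pd f := by
  induction hl with
  | nil => exact .rfl
  | cons j _ ih => exact pd_congr (ih (by grind)) j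
  | swap i j l =>
    filter_upwards [h] with p hp
    exact pd_comm (contDiffAt_foldr_pd hp l (by grind)) j i
  | trans h1 _ ih1 ih2 => exact (ih1 hn).trans (ih2 (h1.length_eq ▸ hn))

end PartialDerivatives

theorem two_le_analyticOrderAt {φ : ℝ → ℝ} {x : ℝ} (hφ : AnalyticAt ℝ φ x) (h0 : φ x = 0)
    (h1 : HasDerivAt φ 0 x) : (2 : ℕ) ≤ analyticOrderAt φ x := by
  refine (natCast_le_analyticOrderAt_iff_iteratedDeriv_eq_zero hφ).2 fun i hi => ?_
  interval_cases i
  · simpa using h0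
  · simpa using h1.deriv

section Flatness

variable {N : ℕ} {μ0 : Fin N → ℝ} {n : ℕ} {L M : ℝ} {f g : ℝ × (Fin N → ℝ) → ℝ}

/-- `f` is flat of order `L` up to `n` derivatives at `μ0`: its iterated partial derivatives of
order at most `n`, taken in any sequence of directions, satisfy the bounds `s ^ (L - ν0)`, where
`ν0` counts the differentiations in `s`; those of order less than `n` are differentiable. -/
def Flat (μ0 : Fin N → ℝ) (n : ℕ) (L : ℝ) (f : ℝ × (Fin N → ℝ) → ℝ) : Prop :=
  ∀ l : List (Option (Fin N)), l.length ≤ n →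
    (l.foldr pd f =O[approach μ0] fun p => p.1 ^ (L - (l.count none : ℝ))) ∧
      (l.length < n → ∀ᶠ p in approach μ0, DifferentiableAt ℝ (l.foldr pd f) p)

/-- The loss in the exponent of `s` caused by one derivative in the given direction. -/
def weight : Option (Fin N) → ℝ
  | none => 1
  | some _ => 0

theorem flat_zero_iff : Flat μ0 0 L f ↔ f =O[approach μ0] fun p => p.1 ^ L := by
  simp [Flat]

theorem flat_succ_iff : Flat μ0 (n + 1) L f ↔ Flat μ0 0 L f ∧
    (∀ᶠ p in approach μ0, DifferentiableAt ℝ f p) ∧ ∀ j, Flat μ0 n (L - weight j) (pd j f) := by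
  have exponent (l : List (Option (Fin N))) (j : Option (Fin N)) :
      L - ((l ++ [j]).count none : ℝ) = L - weight j - (l.count none : ℝ) := by
    cases j <;> simp [weight, sub_sub, add_comm]
  constructor
  · refine fun h => ⟨flat_zero_iff.2 (by simpa using (h [] (by simp)).1),
      (h [] (by simp)).2 (by simp), fun j l hl => ?_⟩
    simpa only [exponent, List.foldr_append, List.foldr_cons, List.foldr_nil, List.length_append,
      List.length_singleton, add_lt_add_iff_right] using h (l ++ [j]) (by simpa using hl)
  · rintro ⟨h0, hd, hpd⟩ l hl
    induction l using List.reverseRecOn with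
    | nil => simpa [hd] using flat_zero_iff.1 h0
    | append_singleton l j =>
      simpa only [exponent, List.foldr_append, List.foldr_cons, List.foldr_nil,
        List.length_append, List.length_singleton, add_lt_add_iff_right] using
        hpd j l (by simpa using hl)

namespace Flat

theorem congr (h : Flat μ0 n L f) (hfg : f =ᶠ[approach μ0] g) : Flat μ0 n L g := by
  intro l hl
  have hpd := foldr_pd_congr hfg l
  refine ⟨(h l hl).1.congr' hpd .rfl, fun hlt => ?_⟩
  filter_upwards [eventually_eventually_nhds_of_approach hpd, (h l hl).2 hlt] with p hp hd
  exact hd.congr_of_eventuallyEq (EventuallyEq.symm hp)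

theorem mono (h : Flat μ0 n L f) (hM : M ≤ L) : Flat μ0 n M f := fun l hl =>
  ⟨(h l hl).1.trans (rpow_isBigO_rpow_of_eventually_le (e := fun _ => L - (l.count none : ℝ))
    (.of_forall fun _ => by linarith)), (h l hl).2⟩

theorem of_le {m : ℕ} (h : Flat μ0 n L f) (hm : m ≤ n) : Flat μ0 m L f := fun l hl =>
  ⟨(h l (hl.trans hm)).1, fun hlt => (h l (hl.trans hm)).2 (hlt.trans_le hm)⟩

theorem isBigO (h : Flat μ0 n L f) : f =O[approach μ0] fun p => p.1 ^ L :=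
  flat_zero_iff.1 (h.of_le n.zero_le)

theorem zero : Flat μ0 n L (fun _ => 0) := by
  have h (l : List (Option (Fin N))) :
      l.foldr pd (fun _ : ℝ × (Fin N → ℝ) => (0 : ℝ)) = fun _ => 0 := by
    induction l with
    | nil => rfl
    | cons j l ih => rw [List.foldr_cons, ih]; ext p; simp [pd]
  exact fun l _ => by simp [h, isBigO_zero]

theorem add (hf : Flat μ0 n L f) (hg : Flat μ0 n L g) : Flat μ0 n L (fun p => f p + g p) := by
  induction n generalizing L f g with
  | zero => exact flat_zero_iff.2 (hf.isBigO.add hg.isBigO)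
  | succ n ih =>
    have ⟨_, hdf, hf'⟩ := flat_succ_iff.1 hf
    have ⟨_, hdg, hg'⟩ := flat_succ_iff.1 hg
    refine flat_succ_iff.2 ⟨flat_zero_iff.2 (hf.isBigO.add hg.isBigO),
      hdf.mp (hdg.mono fun p hgp hfp => hfp.add hgp), fun j => (ih (hf' j) (hg' j)).congr ?_⟩
    filter_upwards [hdf, hdg] with p hfp hgp
    simp [pd, fderiv_fun_add hfp hgp]

theorem mul (hf : Flat μ0 n L f) (hg : Flat μ0 n M g) :
    Flat μ0 n (L + M) (fun p => f p * g p) := by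
  induction n generalizing L M f g with
  | zero => exact flat_zero_iff.2 (isBigO_mul_rpow hf.isBigO hg.isBigO)
  | succ n ih =>
    have ⟨_, hdf, hf'⟩ := flat_succ_iff.1 hf
    have ⟨_, hdg, hg'⟩ := flat_succ_iff.1 hg
    refine flat_succ_iff.2 ⟨flat_zero_iff.2 (isBigO_mul_rpow hf.isBigO hg.isBigO),
      hdf.mp (hdg.mono fun p hgp hfp => hfp.mul hgp), fun j => ?_⟩
    have h1 := ih (hf.of_le n.le_succ) (hg' j)
    have h2 := ih (hf' j) (hg.of_le n.le_succ)
    rw [← add_sub_assoc] at h1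
    rw [sub_add_eq_add_sub] at h2
    refine (h1.add h2).congr ?_
    filter_upwards [hdf, hdg] with p hfp hgp
    simp [pd, fderiv_fun_mul hfp hgp, mul_comm]

theorem of_fst_succ {h h' : ℝ → ℝ} (hO : h =O[𝓝[>] 0] fun s => s ^ L)
    (hd : ∀ᶠ s in 𝓝[>] 0, HasDerivAt h (h' s) s) (hh' : Flat μ0 n (L - 1) (fun p => h' p.1)) :
    Flat μ0 (n + 1) L (fun p => h p.1) := by
  have hfd : ∀ᶠ p in approach μ0, HasFDerivAt (fun p => h p.1)
      (h' p.1 • ContinuousLinearMap.fst ℝ ℝ (Fin N → ℝ)) p := by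
    filter_upwards [eventually_approach_fst hd] with p hp
    exact hp.comp_hasFDerivAt p hasFDerivAt_fst
  refine flat_succ_iff.2 ⟨flat_zero_iff.2 (hO.comp_tendsto tendsto_fst),
    hfd.mono fun p hp => hp.differentiableAt, ?_⟩
  rintro (_ | i)
  · refine hh'.congr (hfd.mono fun p hp => ?_)
    simp [pd, hp.fderiv, coordVec]
  · refine zero.congr (hfd.mono fun p hp => ?_)
    simp [pd, hp.fderiv, coordVec]

theorem of_snd {a : (Fin N → ℝ) → ℝ} (ha : ∀ᶠ μ in 𝓝 μ0, ContDiffAt ℝ n a μ) :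
    Flat μ0 n 0 (fun p => a p.2) := by
  have flat_zero {a : (Fin N → ℝ) → ℝ} (ha : ContinuousAt a μ0) :
      Flat μ0 0 0 (fun p => a p.2) :=
    flat_zero_iff.2 (isBigO_rpow_zero_of_tendsto (ha.tendsto.comp tendsto_snd))
  induction n generalizing a with
  | zero => exact flat_zero ha.self_of_nhds.continuousAt
  | succ n ih =>
    have hfd : ∀ᶠ p in approach μ0, HasFDerivAt (fun p : ℝ × (Fin N → ℝ) => a p.2)
        ((fderiv ℝ a p.2).comp (ContinuousLinearMap.snd ℝ ℝ (Fin N → ℝ))) p := by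
      filter_upwards [eventually_approach_snd ha] with p hp
      exact (hp.differentiableAt (by simp)).hasFDerivAt.comp p hasFDerivAt_snd
    refine flat_succ_iff.2 ⟨flat_zero ha.self_of_nhds.continuousAt,
      hfd.mono fun p hp => hp.differentiableAt, ?_⟩
    rintro (_ | i)
    · refine zero.congr (hfd.mono fun p hp => ?_)
      simp [pd, hp.fderiv, coordVec]
    · have ha' : ∀ᶠ μ in 𝓝 μ0, ContDiffAt ℝ n (fun μ => fderiv ℝ a μ (Pi.single i 1)) μ :=
        ha.mono fun μ hμ => (hμ.fderiv_right le_rfl).clm_apply contDiffAt_const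
      simp only [weight, sub_zero]
      refine (ih ha').congr (hfd.mono fun p hp => ?_)
      simp [pd, hp.fderiv, coordVec]

theorem const (c : ℝ) : Flat μ0 n 0 (fun _ => c) :=
  of_snd (.of_forall fun _ => contDiffAt_const)

theorem pow (hf : Flat μ0 n L f) (k : ℕ) : Flat μ0 n (k * L) (fun p => f p ^ k) := by
  induction k with
  | zero => simpa using const 1
  | succ k ih => simpa [pow_succ, add_mul] using ih.mul hf

theorem tendsto_zero (hf : Flat μ0 n L f) (hL : 0 < L) : Tendsto f (approach μ0) (𝓝 0) := by
  have h : Tendsto (fun s : ℝ => s ^ L) (𝓝[>] 0) (𝓝 0) := by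
    have h0 := (Real.continuousAt_rpow_const 0 L (.inr hL.le)).tendsto
    rw [Real.zero_rpow hL.ne'] at h0
    exact h0.mono_left nhdsWithin_le_nhds
  exact hf.isBigO.trans_tendsto (h.comp tendsto_fst)

theorem fst_rpow (c : ℝ) : Flat μ0 n c (fun p => p.1 ^ c) := by
  induction n generalizing c with
  | zero => exact flat_zero_iff.2 (isBigO_refl _ _)
  | succ n ih =>
    refine of_fst_succ (h := fun s => s ^ c) (h' := fun s => c * s ^ (c - 1))
      (isBigO_refl _ _) ?_ (by simpa using (const c).mul (ih (c - 1)))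
    filter_upwards [self_mem_nhdsWithin] with s hs
    exact Real.hasDerivAt_rpow_const (.inl hs.ne')

theorem log_fst (hL : L < 0) : Flat μ0 n L (fun p => Real.log p.1) := by
  have hO : Real.log =O[𝓝[>] 0] fun s => s ^ L := (isLittleO_log_rpow_nhdsGT_zero hL).isBigO
  cases n with
  | zero => exact flat_zero_iff.2 (hO.comp_tendsto tendsto_fst)
  | succ n =>
    refine of_fst_succ (h' := fun s => s ^ (-1 : ℝ)) hO ?_ ((fst_rpow (-1)).mono (by linarith))
    filter_upwards [self_mem_nhdsWithin] with s hs
    simpa only [Real.rpow_neg_one] using Real.hasDerivAt_log hs.ne'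

theorem comp_succ {φ φ' : ℝ → ℝ} {P : ℝ} (hf : Flat μ0 (n + 1) M f)
    (hd : ∀ᶠ p in approach μ0, HasDerivAt φ (φ' (f p)) (f p))
    (hO : (fun p => φ (f p)) =O[approach μ0] fun p => p.1 ^ L)
    (h' : Flat μ0 n P (fun p => φ' (f p))) (hL : L ≤ P + M) :
    Flat μ0 (n + 1) L (fun p => φ (f p)) := by
  have ⟨_, hdf, hf'⟩ := flat_succ_iff.1 hf
  have hfd : ∀ᶠ p in approach μ0,
      HasFDerivAt (fun p => φ (f p)) (φ' (f p) • fderiv ℝ f p) p := by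
    filter_upwards [hd, hdf] with p hp hfp
    exact hp.comp_hasFDerivAt p hfp.hasFDerivAt
  refine flat_succ_iff.2 ⟨flat_zero_iff.2 hO, hfd.mono fun p hp => hp.differentiableAt,
    fun j => ((h'.mul (hf' j)).mono (by linarith)).congr (hfd.mono fun p hp => ?_)⟩
  simp [pd, hp.fderiv]

theorem comp {c : ℝ} {φ : ℝ → ℝ} (hf : Flat μ0 n 0 f) (hc : Tendsto f (approach μ0) (𝓝 c))
    (hφ : ContDiffAt ℝ n φ c) : Flat μ0 n 0 (fun p => φ (f p)) := by
  have hO {φ : ℝ → ℝ} (hφ : ContinuousAt φ c) :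
      (fun p => φ (f p)) =O[approach μ0] fun p => p.1 ^ (0 : ℝ) :=
    isBigO_rpow_zero_of_tendsto (hφ.tendsto.comp hc)
  induction n generalizing φ with
  | zero => exact flat_zero_iff.2 (hO hφ.continuousAt)
  | succ n ih =>
    have hd : ∀ᶠ x in 𝓝 c, HasDerivAt φ (deriv φ x) x :=
      (hφ.eventually (by simp)).mono fun x hx => (hx.differentiableAt (by simp)).hasDerivAt
    exact comp_succ hf (hc.eventually hd) (hO hφ.continuousAt)
      (ih (hf.of_le n.le_succ) (hφ.derivWithin le_rfl)) (by simp)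

theorem comp_of_le_analyticOrderAt {φ : ℝ → ℝ} {k : ℕ} (hf : Flat μ0 n M f) (hM : 0 < M)
    (hφ : AnalyticAt ℝ φ 0) (hk : k ≤ analyticOrderAt φ 0) :
    Flat μ0 n (k * M) (fun p => φ (f p)) := by
  obtain ⟨h, hh, hfac⟩ := (natCast_le_analyticOrderAt hφ).1 hk
  have hf0 := hf.tendsto_zero hM
  have hprod := (hf.pow k).mul ((hf.mono hM.le).comp hf0 hh.contDiffAt)
  rw [add_zero] at hprod
  refine hprod.congr ((hf0.eventually hfac).mono fun p hp => ?_)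
  simp [hp]

/-- The order is short of `lam μ0` because each `μ`-derivative costs a factor `log s` and the
variation of `lam` near `μ0` costs an arbitrarily small power of `s`. -/
theorem fst_rpow_snd {lam : (Fin N → ℝ) → ℝ} (hlam : ∀ᶠ μ in 𝓝 μ0, ContDiffAt ℝ n lam μ)
    (hL : L < lam μ0) : Flat μ0 n L (fun p => p.1 ^ lam p.2) := by
  have hexp : (fun p : ℝ × (Fin N → ℝ) => p.1 ^ lam p.2) =ᶠ[approach μ0]
      fun p => Real.exp (lam p.2 * Real.log p.1) := by
    filter_upwards [approach_pos] with p hp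
    rw [Real.rpow_def_of_pos hp, mul_comm]
  have hO {L : ℝ} (hL : L < lam μ0) :
      (fun p : ℝ × (Fin N → ℝ) => p.1 ^ lam p.2) =O[approach μ0] fun p => p.1 ^ L :=
    rpow_isBigO_rpow_of_eventually_le <|
      (hlam.self_of_nhds.continuousAt.tendsto.eventually (lt_mem_nhds hL)).mono fun _ h => h.le
  induction n generalizing L with
  | zero => exact flat_zero_iff.2 (hO hL)
  | succ n ih =>
    obtain ⟨P, hLP, hP⟩ := exists_between hL
    have hlog := (of_snd hlam).mul (log_fst (L := L - P) (by linarith))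
    have hderiv : Flat μ0 n P (fun p => Real.exp (lam p.2 * Real.log p.1)) :=
      (ih (hlam.mono fun μ h => h.of_le (by norm_cast; omega)) hP).congr hexp
    exact (comp_succ hlog (.of_forall fun p => Real.hasDerivAt_exp _) ((hO hL).congr' hexp .rfl)
      hderiv (by linarith)).congr hexp.symm

/-- With `w = e log (1 + f)`, the function is `(exp w - 1 - w) + e (log (1 + f) - f)`, and
both `exp x - 1 - x` and `log (1 + x) - x` vanish to second order at `0`. -/
theorem one_add_rpow_sub {e : ℝ × (Fin N → ℝ) → ℝ} (hf : Flat μ0 n M f) (hM : 0 < M)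
    (he : Flat μ0 n 0 e) : Flat μ0 n (2 * M) (fun p => (1 + f p) ^ e p - 1 - e p * f p) := by
  have hlog : AnalyticAt ℝ (fun x => Real.log (1 + x)) 0 :=
    AnalyticAt.log (by fun_prop) (by simp)
  have hdlog : HasDerivAt (fun x => Real.log (1 + x) - x) 0 0 := by
    simpa using
      (((hasDerivAt_id' (0 : ℝ)).const_add 1).log (by simp)).fun_sub (hasDerivAt_id' 0)
  have hdexp : HasDerivAt (fun x => Real.exp x - 1 - x) 0 0 := by
    simpa using ((Real.hasDerivAt_exp 0).sub_const 1).fun_sub (hasDerivAt_id' 0)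
  have hlog1 : Flat μ0 n M (fun p => Real.log (1 + f p)) := by
    simpa using hf.comp_of_le_analyticOrderAt (k := 1) hM hlog
      (by exact_mod_cast Order.one_le_iff_ne_zero.2 (hlog.analyticOrderAt_ne_zero.2 (by simp)))
  have hlog2 : Flat μ0 n (2 * M) (fun p => Real.log (1 + f p) - f p) :=
    hf.comp_of_le_analyticOrderAt (k := 2) hM (hlog.sub analyticAt_id)
      (two_le_analyticOrderAt (hlog.sub analyticAt_id) (by simp) hdlog)
  have hexp : Flat μ0 n (2 * M)
      (fun p => Real.exp (e p * Real.log (1 + f p)) - 1 - e p * Real.log (1 + f p)) := by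
    have hw : Flat μ0 n M (fun p => e p * Real.log (1 + f p)) := by simpa using he.mul hlog1
    exact hw.comp_of_le_analyticOrderAt (φ := fun x => Real.exp x - 1 - x) (k := 2) hM
      (by fun_prop) (two_le_analyticOrderAt (by fun_prop) (by simp) hdexp)
  have hsum := hexp.add (by simpa using he.mul hlog2)
  refine hsum.congr ?_
  have hbase := (hf.tendsto_zero hM).eventually (lt_mem_nhds (by norm_num : (-1 : ℝ) < 0))
  filter_upwards [hbase] with p hp
  rw [Real.rpow_def_of_pos (by linarith), mul_comm (Real.log _)]
  ring

end Flat

end Flatness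

section MixedDerivatives

variable {N : ℕ}

/-- The directions of differentiation in `mixedDeriv ν0 ν`, outermost first. -/
def directions (ν0 : ℕ) (ν : Fin N → ℕ) : List (Option (Fin N)) :=
  List.replicate ν0 none ++ (List.finRange N).flatMap fun i => List.replicate (ν i) (some i)

theorem length_directions (ν0 : ℕ) (ν : Fin N → ℕ) :
    (directions ν0 ν).length = ν0 + ∑ i, ν i := by
  simp [directions, List.length_flatMap, Fin.sum_univ_def]

theorem count_none_directions (ν0 : ℕ) (ν : Fin N → ℕ) : (directions ν0 ν).count none = ν0 := by
  simp [directions, List.count_flatMap, Function.comp_def, List.count_replicate]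

theorem count_some_directions (ν0 : ℕ) (ν : Fin N → ℕ) (i : Fin N) :
    (directions ν0 ν).count (some i) = ν i := by
  simp [directions, List.count_flatMap, Function.comp_def, List.count_replicate,
    ← Fin.sum_univ_def]

theorem perm_directions_count (l : List (Option (Fin N))) :
    l.Perm (directions (l.count none) fun i => l.count (some i)) := by
  rw [List.perm_iff_count]
  rintro (_ | i)
  · rw [count_none_directions]
  · rw [count_some_directions]

/-- `dS` and `dMu i` as a single family, the analogue of `pd` for functions in curried form. -/
noncomputable def curriedPd : Option (Fin N) → (ℝ → (Fin N → ℝ) → ℝ) → ℝ → (Fin N → ℝ) → ℝ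
  | none => dS
  | some i => dMu i

theorem foldr_replicate_eq_iterate {α β : Type*} (F : α → β → β) (a : α) (k : ℕ) (b : β) :
    (List.replicate k a).foldr F b = (F a)^[k] b := by
  induction k with
  | zero => rfl
  | succ k ih => rw [List.replicate_succ, List.foldr_cons, ih, Function.iterate_succ_apply']

theorem mixedDeriv_eq_foldr (ν0 : ℕ) (ν : Fin N → ℕ) (ψ : ℝ → (Fin N → ℝ) → ℝ) :
    mixedDeriv ν0 ν ψ = (directions ν0 ν).foldr curriedPd ψ := by
  simp only [directions, List.foldr_append, List.foldr_flatMap, foldr_replicate_eq_iterate]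
  rfl

variable {μ0 : Fin N → ℝ} {n : ℕ} {K : ℕ∞} {L : ℝ} {U : Set (Fin N → ℝ)}
  {ψ : ℝ → (Fin N → ℝ) → ℝ}

theorem curriedPd_eq_pd {f : ℝ × (Fin N → ℝ) → ℝ} {p : ℝ × (Fin N → ℝ)}
    (hψ : ∀ᶠ q in 𝓝 p, ψ q.1 q.2 = f q) (hf : DifferentiableAt ℝ f p) (j : Option (Fin N)) :
    curriedPd j ψ p.1 p.2 = pd j f p := by
  obtain ⟨s, μ⟩ := p
  have hd : HasFDerivAt (fun q : ℝ × (Fin N → ℝ) => ψ q.1 q.2) (fderiv ℝ f (s, μ)) (s, μ) :=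
    hf.hasFDerivAt.congr_of_eventuallyEq hψ
  cases j with
  | none =>
    exact (hd.comp_hasDerivAt (f := fun t => (t, μ)) s
      ((hasDerivAt_id s).prodMk (hasDerivAt_const s μ))).deriv
  | some i =>
    have hslice := (hd.comp (f := fun m => (s, m)) μ (hasFDerivAt_prodMk_right s μ)).fderiv
    simpa [pd, coordVec, curriedPd, dMu, Function.comp_def] using
      congrArg (fun T => T (Pi.single i 1)) hslice

theorem foldr_curriedPd_eventuallyEq
    (h : ∀ᶠ p in approach μ0, ContDiffAt ℝ n (fun p : ℝ × (Fin N → ℝ) => ψ p.1 p.2) p)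
    {l : List (Option (Fin N))} (hl : l.length ≤ n) :
    (fun p => l.foldr curriedPd ψ p.1 p.2) =ᶠ[approach μ0] l.foldr pd fun p => ψ p.1 p.2 := by
  induction l with
  | nil => exact .rfl
  | cons j l ih =>
    filter_upwards [eventually_eventually_nhds_of_approach (ih (by grind)), h] with p hp hc
    exact curriedPd_eq_pd hp
      ((contDiffAt_foldr_pd (m := 1) hc l (by grind)).differentiableAt (by simp)) j

theorem eventually_contDiffAt_of_contDiffOn (hU : U ∈ 𝓝 μ0) {k : WithTop ℕ∞} {ε : ℝ}
    (hε : 0 < ε) {f : ℝ × (Fin N → ℝ) → ℝ} (hf : ContDiffOn ℝ k f (Ioo 0 ε ×ˢ U)) :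
    ∀ᶠ p in approach μ0, ContDiffAt ℝ k f p := by
  have hbox : Ioo 0 ε ×ˢ U ∈ approach μ0 := (approach_basis μ0).mem_of_mem (i := (ε, U)) ⟨hε, hU⟩
  filter_upwards [eventually_eventually_nhds_of_approach hbox] with p hp
  exact hf.contDiffAt hp

theorem eventually_contDiffAt_natCast {E : Type*} [NormedAddCommGroup E] [NormedSpace ℝ E]
    {F : Filter E} {g : E → ℝ} (h : ∀ᶠ x in F, ContDiffAt ℝ K g x) (hn : (n : ℕ∞) ≤ K) :
    ∀ᶠ x in F, ContDiffAt ℝ n g x :=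
  h.mono fun _ hx => hx.of_le (by exact_mod_cast hn)

theorem MemF.eventually_contDiffAt (hU : U ∈ 𝓝 μ0) (h : MemF K L U μ0 ψ) :
    ∀ᶠ p in approach μ0, ContDiffAt ℝ K (fun p : ℝ × (Fin N → ℝ) => ψ p.1 p.2) p := by
  obtain ⟨⟨ε, hε, hc⟩, -⟩ := h
  exact eventually_contDiffAt_of_contDiffOn hU hε hc

theorem MemF.flat (hU : U ∈ 𝓝 μ0) (h : MemF K L U μ0 ψ) (hn : (n : ℕ∞) ≤ K) :
    Flat μ0 n L (fun p => ψ p.1 p.2) := by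
  have hc : ∀ᶠ p in approach μ0, ContDiffAt ℝ n (fun p : ℝ × (Fin N → ℝ) => ψ p.1 p.2) p :=
    eventually_contDiffAt_natCast (h.eventually_contDiffAt hU) hn
  intro l hl
  constructor
  · have hperm := perm_directions_count l
    have hlen := hperm.length_eq
    have hbound := (isBigO_approach_iff hU).2 <| h.2 (l.count none) (fun i => l.count (some i))
      (by rw [← length_directions, ← hlen]; exact le_trans (by exact_mod_cast hl) hn)
    rw [mixedDeriv_eq_foldr] at hbound
    exact hbound.congr' ((foldr_curriedPd_eventuallyEq hc (hlen ▸ hl)).trans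
      (foldr_pd_perm hc hperm hl).symm) .rfl
  · intro hlt
    filter_upwards [hc] with p hp
    exact (contDiffAt_foldr_pd (m := 1) hp l (by omega)).differentiableAt (by simp)

theorem memF_of_flat (hU : U ∈ 𝓝 μ0) {ε : ℝ} (hε : 0 < ε)
    (hc : ContDiffOn ℝ K (fun p : ℝ × (Fin N → ℝ) => ψ p.1 p.2) (Ioo 0 ε ×ˢ U))
    (h : ∀ n : ℕ, (n : ℕ∞) ≤ K → Flat μ0 n L (fun p => ψ p.1 p.2)) : MemF K L U μ0 ψ := by
  refine ⟨⟨ε, hε, hc⟩, fun ν0 ν hν => (isBigO_approach_iff hU).1 ?_⟩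
  rw [← length_directions] at hν
  have hc' : ∀ᶠ p in approach μ0, ContDiffAt ℝ (directions ν0 ν).length
      (fun p : ℝ × (Fin N → ℝ) => ψ p.1 p.2) p :=
    eventually_contDiffAt_natCast (eventually_contDiffAt_of_contDiffOn hU hε hc) hν
  have hbound := (h _ hν _ le_rfl).1
  rw [count_none_directions] at hbound
  rw [mixedDeriv_eq_foldr]
  exact hbound.congr' (foldr_curriedPd_eventuallyEq hc' le_rfl).symm .rfl

theorem contDiffAt_bump_snd_mul (χ : ContDiffBump μ0) {f : ℝ × (Fin N → ℝ) → ℝ}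
    {p : ℝ × (Fin N → ℝ)} (hf : p.2 ∈ Metric.closedBall μ0 χ.rOut → ContDiffAt ℝ K f p) :
    ContDiffAt ℝ K (fun p => χ p.2 * f p) p := by
  by_cases hp : p.2 ∈ Metric.closedBall μ0 χ.rOut
  · exact (χ.contDiffAt.comp p contDiffAt_snd).mul (hf hp)
  · have hzero : (fun p => χ p.2 * f p) =ᶠ[𝓝 p] fun _ => 0 := by
      rw [← χ.tsupport_eq, notMem_tsupport_iff_eventuallyEq] at hp
      filter_upwards [continuousAt_snd.eventually hp] with q hq
      simp [hq]
    exact contDiffAt_const.congr_of_eventuallyEq hzero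

/-- `MemF` demands smoothness over all of `U`, which a cutoff in `μ` provides. -/
theorem exists_memF_eventuallyEq (hU : U ∈ 𝓝 μ0) {f : ℝ × (Fin N → ℝ) → ℝ}
    (hc : ∀ᶠ p in approach μ0, ContDiffAt ℝ K f p)
    (hf : ∀ n : ℕ, (n : ℕ∞) ≤ K → Flat μ0 n L f) :
    ∃ φ, MemF K L U μ0 φ ∧ ∀ᶠ p in approach μ0, φ p.1 p.2 = f p := by
  obtain ⟨⟨ε, W⟩, ⟨hε, hW⟩, hbox⟩ := (approach_basis μ0).eventually_iff.1 hc
  obtain ⟨r, hr, hrW⟩ := Metric.nhds_basis_closedBall.mem_iff.1 hW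
  let χ : ContDiffBump μ0 := ⟨r / 2, r, half_pos hr, half_lt_self hr⟩
  have hχ : ∀ᶠ p in approach μ0, χ p.2 * f p = f p := by
    filter_upwards [eventually_approach_snd χ.eventuallyEq_one] with p hp
    simp [hp]
  refine ⟨fun s μ => χ μ * f (s, μ), memF_of_flat hU hε ?_ fun n hn => ?_, hχ⟩
  · exact fun p hp => (contDiffAt_bump_snd_mul χ fun hball =>
      hbox ⟨hp.1, hrW hball⟩).contDiffWithinAt
  · exact (hf n hn).congr (EventuallyEq.symm hχ)

end MixedDerivatives

section Expansion

variable {N : ℕ} {μ0 : Fin N → ℝ} {n : ℕ} {K : ℕ∞} {L M : ℝ} {U : Set (Fin N → ℝ)}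

theorem Flat.tendsto_add_add {b : (Fin N → ℝ) → ℝ} {u ψ : ℝ × (Fin N → ℝ) → ℝ}
    (hb : ContinuousAt b μ0) (hu : Flat μ0 n M u) (hM : 0 < M) (hψ : Flat μ0 n L ψ)
    (hL : 0 < L) : Tendsto (fun p => b p.2 + u p + ψ p) (approach μ0) (𝓝 (b μ0)) := by
  have hb' : Tendsto (fun p => b p.2) (approach μ0) (𝓝 (b μ0)) := hb.tendsto.comp tendsto_snd
  simpa only [add_zero] using (hb'.add (hu.tendsto_zero hM)).add (hψ.tendsto_zero hL)

/-- With `v = (u + ψ) / b`, the function is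
`b ^ e * ((1 + v) ^ e - 1 - e * v) + e * b ^ (e - 1) * ψ`. -/
theorem Flat.add_add_rpow_sub {b e : (Fin N → ℝ) → ℝ} {u ψ : ℝ × (Fin N → ℝ) → ℝ}
    (hb : ∀ᶠ μ in 𝓝 μ0, ContDiffAt ℝ n b μ) (hb0 : 0 < b μ0)
    (he : ∀ᶠ μ in 𝓝 μ0, ContDiffAt ℝ n e μ) (hL : 0 < L) (hu : Flat μ0 n (L / 2) u)
    (hψ : Flat μ0 n L ψ) :
    Flat μ0 n L (fun p => (b p.2 + u p + ψ p) ^ e p.2 - b p.2 ^ e p.2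
      - e p.2 * b p.2 ^ (e p.2 - 1) * u p) := by
  have hbpos : ∀ᶠ μ in 𝓝 μ0, 0 < b μ :=
    hb.self_of_nhds.continuousAt.tendsto.eventually (lt_mem_nhds hb0)
  have hbinv : Flat μ0 n 0 (fun p => (b p.2)⁻¹) :=
    of_snd <| by filter_upwards [hb, hbpos] with μ hbμ hpos using hbμ.inv hpos.ne'
  have hbe : Flat μ0 n 0 (fun p => b p.2 ^ e p.2) :=
    of_snd <| by filter_upwards [hb, he, hbpos] with μ hbμ heμ hpos using hbμ.rpow heμ hpos.ne'
  have hv : Flat μ0 n (L / 2) (fun p => (b p.2)⁻¹ * (u p + ψ p)) := by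
    simpa using hbinv.mul (hu.add (hψ.mono (half_le_self hL.le)))
  have hquadratic : Flat μ0 n L (fun p => b p.2 ^ e p.2 *
      ((1 + (b p.2)⁻¹ * (u p + ψ p)) ^ e p.2 - 1 - e p.2 * ((b p.2)⁻¹ * (u p + ψ p)))) := by
    simpa [mul_div_cancel₀] using hbe.mul (hv.one_add_rpow_sub (half_pos hL) (of_snd he))
  have hlinear : Flat μ0 n L (fun p => e p.2 * (b p.2 ^ e p.2 * (b p.2)⁻¹) * ψ p) := by
    simpa using ((of_snd he).mul (hbe.mul hbinv)).mul hψ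
  refine (hquadratic.add hlinear).congr ?_
  have hbase := (tendsto_add_add hb.self_of_nhds.continuousAt hu (half_pos hL) hψ hL).eventually
    (lt_mem_nhds hb0)
  filter_upwards [hbase, eventually_approach_snd hbpos] with p hp hpos
  have hfactor : b p.2 + u p + ψ p = b p.2 * (1 + (b p.2)⁻¹ * (u p + ψ p)) := by
    field_simp
    ring
  rw [hfactor] at hp ⊢
  rw [Real.mul_rpow hpos.le (pos_of_mul_pos_right hp hpos.le).le, Real.rpow_sub_one hpos.ne']
  field_simp
  ring

theorem contDiffAt_add_add_rpow_sub {E : Type*} [NormedAddCommGroup E] [NormedSpace ℝ E]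
    {k : WithTop ℕ∞} {b e u ψ : E → ℝ} {x : E} (hb : ContDiffAt ℝ k b x) (hb0 : b x ≠ 0)
    (he : ContDiffAt ℝ k e x) (hu : ContDiffAt ℝ k u x) (hψ : ContDiffAt ℝ k ψ x)
    (hbase : b x + u x + ψ x ≠ 0) : ContDiffAt ℝ k
      (fun x => (b x + u x + ψ x) ^ e x - b x ^ e x - e x * b x ^ (e x - 1) * u x) x :=
  ((((hb.add hu).add hψ).rpow he hbase).sub (hb.rpow he hb0)).sub
    ((he.mul (hb.rpow (he.sub contDiffAt_const) hb0)).mul hu)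

theorem exists_memF_add_add_rpow (hU : U ∈ 𝓝 μ0) {b e : (Fin N → ℝ) → ℝ}
    (hb : ∀ᶠ μ in 𝓝 μ0, ContDiffAt ℝ K b μ) (hb0 : 0 < b μ0)
    (he : ∀ᶠ μ in 𝓝 μ0, ContDiffAt ℝ K e μ) (hL : 0 < L) {u : ℝ × (Fin N → ℝ) → ℝ}
    (hu : ∀ᶠ p in approach μ0, ContDiffAt ℝ K u p)
    (hu_flat : ∀ n : ℕ, n ≤ K → Flat μ0 n (L / 2) u)
    {ψ : ℝ → (Fin N → ℝ) → ℝ} (hψ : MemF K L U μ0 ψ) :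
    ∃ φ, MemF K L U μ0 φ ∧ ∀ᶠ p in approach μ0,
      (b p.2 + u p + ψ p.1 p.2) ^ e p.2
        = b p.2 ^ e p.2 + e p.2 * b p.2 ^ (e p.2 - 1) * u p + φ p.1 p.2 := by
  have hb_cont : ContinuousAt b μ0 := hb.self_of_nhds.continuousAt
  have hbase : ∀ᶠ p in approach μ0, 0 < b p.2 + u p + ψ p.1 p.2 :=
    (Flat.tendsto_add_add hb_cont (hu_flat 0 (by simp)) (half_pos hL)
      (hψ.flat hU (n := 0) (by simp)) hL).eventually (lt_mem_nhds hb0)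
  have hbpos := eventually_approach_snd (hb_cont.tendsto.eventually (lt_mem_nhds hb0))
  have hsmooth : ∀ᶠ p in approach μ0, ContDiffAt ℝ K
      (fun p => (b p.2 + u p + ψ p.1 p.2) ^ e p.2 - b p.2 ^ e p.2
        - e p.2 * b p.2 ^ (e p.2 - 1) * u p) p := by
    filter_upwards [eventually_approach_snd hb, eventually_approach_snd he, hu,
      hψ.eventually_contDiffAt hU, hbpos, hbase] with p hbp hep hup hψp hb0p hbase_p
    exact contDiffAt_add_add_rpow_sub (hbp.comp p contDiffAt_snd) hb0p.ne'
      (hep.comp p contDiffAt_snd) hup hψp hbase_p.ne'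
  obtain ⟨φ, hφ, hφ_eq⟩ := exists_memF_eventuallyEq hU hsmooth fun n hn =>
    Flat.add_add_rpow_sub (eventually_contDiffAt_natCast hb hn) hb0
      (eventually_contDiffAt_natCast he hn) hL (hu_flat n hn) (hψ.flat hU hn)
  refine ⟨φ, hφ, hφ_eq.mono fun p hp => ?_⟩
  rw [hp]
  ring

theorem flat_rpow_expansion_general (hU : U ∈ 𝓝 μ0) {a b η lam : (Fin N → ℝ) → ℝ}
    (ha : ContDiffOn ℝ K a U) (hb : ContDiffOn ℝ K b U) (hη : ContDiffOn ℝ K η U)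
    (hlam : ContDiffOn ℝ K lam U) (hb0 : 0 < b μ0) (hL : 0 < L) (hLlam : L < 2 * lam μ0)
    {ψ : ℝ → (Fin N → ℝ) → ℝ} (hψ : MemF K L U μ0 ψ) :
    ∃ φ, MemF K L U μ0 φ ∧ ∀ᶠ p in approach μ0,
      (b p.2 + a p.2 * p.1 ^ lam p.2 + ψ p.1 p.2) ^ η p.2
        = b p.2 ^ η p.2 + η p.2 * b p.2 ^ (η p.2 - 1) * (a p.2 * p.1 ^ lam p.2) + φ p.1 p.2 := by
  have hsmooth {g : (Fin N → ℝ) → ℝ} (hg : ContDiffOn ℝ K g U) :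
      ∀ᶠ μ in 𝓝 μ0, ContDiffAt ℝ K g μ :=
    (eventually_mem_nhds_iff.2 hU).mono fun μ hμ => hg.contDiffAt hμ
  refine exists_memF_add_add_rpow hU (hsmooth hb) hb0 (hsmooth hη) hL
    (u := fun p => a p.2 * p.1 ^ lam p.2) ?_ (fun n hn => ?_) hψ
  · filter_upwards [approach_pos, eventually_approach_snd (hsmooth ha),
      eventually_approach_snd (hsmooth hlam)] with p hp hap hlamp
    exact (hap.comp p contDiffAt_snd).mul
      (contDiffAt_fst.rpow (hlamp.comp p contDiffAt_snd) hp.ne')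
  · simpa using (Flat.of_snd (eventually_contDiffAt_natCast (hsmooth ha) hn)).mul
      (Flat.fst_rpow_snd (eventually_contDiffAt_natCast (hsmooth hlam) hn)
        (by linarith : L / 2 < lam μ0))

end Expansion

/-- Lemma 3.4: expansion of `(b + a s^λ + ψ)^η` for (L,K)-flat ψ. -/
theorem flat_rpow_expansion {N : ℕ} (K : ℕ∞) (U : Set (Fin N → ℝ)) (hU : IsOpen U)
    (μ0 : Fin N → ℝ) (hμ0 : μ0 ∈ U)
    (a b η lam : (Fin N → ℝ) → ℝ)
    (ha : ContDiffOn ℝ K a U) (hb : ContDiffOn ℝ K b U)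
    (hη : ContDiffOn ℝ K η U) (hlam : ContDiffOn ℝ K lam U)
    (hbpos : ∀ μ ∈ U, 0 < b μ) (hlampos : ∀ μ ∈ U, 0 < lam μ)
    (L : ℝ) (hL : L ∈ Set.Ioo (lam μ0) (2 * lam μ0))
    (ψ : ℝ → (Fin N → ℝ) → ℝ) (hψ : MemF K L U μ0 ψ) :
    ∃ φ : ℝ → (Fin N → ℝ) → ℝ, MemF K L U μ0 φ ∧
      ∃ V ⊆ U, V ∈ 𝓝 μ0 ∧ ∃ s0 > 0, ∀ μ ∈ V, ∀ s ∈ Set.Ioo (0:ℝ) s0,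
        |a μ * s ^ lam μ / b μ| < 1 →
          (b μ + a μ * s ^ lam μ + ψ s μ) ^ η μ
            = b μ ^ η μ + η μ * b μ ^ (η μ - 1) * (a μ * s ^ lam μ) + φ s μ := by
  obtain ⟨φ, hφ, hφ_eq⟩ := flat_rpow_expansion_general (hU.mem_nhds hμ0) ha hb hη hlam
    (hbpos μ0 hμ0) ((hlampos μ0 hμ0).trans hL.1) hL.2 hψ
  obtain ⟨⟨s0, V⟩, ⟨hs0, hV⟩, hbox⟩ := (approach_basis μ0).eventually_iff.1 hφ_eq
  exact ⟨φ, hφ, V ∩ U, inter_subset_right, inter_mem hV (hU.mem_nhds hμ0), s0, hs0,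
    fun μ hμ s hs _ => hbox (mk_mem_prod hs hμ.1)⟩
end

section
/- For every δ > 0, both functions (s,α) ↦ ω(s;α) and (s,α) ↦ 1/ω(s;α) belong to the class 𝓕^∞_{−δ}(W) with parameter space ℝ and W = {α ∈ ℝ : α < δ}. -/
/-!
With `L = -log s` the compensator is `ω(s;α) = L Φ(αL)`, where `Φ(x) = (eˣ - 1)/x = ∫₀¹ e^{tx} dt`
is the slope of `exp` at `0`. As `0 ≤ tⁿ ≤ 1` under the integral, every derivative of `Φ` satisfies
`|Φ⁽ⁿ⁾| ≤ Φ`, and by the Leibniz rule every derivative of `1/Φ` is bounded by a multiple of `1/Φ`.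
For `F = Φ` or `F = 1/Φ`, the span of the functions `c(μ) s^p L^r F⁽ⁿ⁾(a(μ) L)` is stable under
`∂/∂μᵢ`, while `∂/∂s` only lowers `p` by one. Hence a mixed derivative of order `ν₀` in `s` is
`O(s^{-ν₀} L^k |F(a(μ) L)|)` for some `k`. Finally `Φ(x) ≤ e^{max(x, 0)}` and `1/Φ(x) ≤ 1 + |x|`
bound the last factor, and an arbitrarily small negative power of `s` absorbs the powers of `L`.
-/

open Topology Filter Set

open Asymptotics MeasureTheory ProbabilityTheory
open scoped ContDiff

section DominatesDerivs

/-- A smooth function all of whose derivatives are bounded by constant multiples of the function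
itself, globally. Differentiating `c(μ) L^r F(a(μ) L)` then never produces anything larger than
`|F(a(μ) L)|` up to powers of `L`. -/
structure DominatesDerivs {𝕜 : Type*} [NontriviallyNormedField 𝕜] (F : 𝕜 → 𝕜) : Prop where
  contDiff : ContDiff 𝕜 ∞ F
  isBigO : ∀ n, iteratedDeriv n F =O[⊤] F

/-- The Leibniz rule for `F * F⁻¹ = 1` expresses `F * (F⁻¹)⁽ⁿ⁾` through lower derivatives. -/
theorem DominatesDerivs.inv {𝕜 : Type*} [NontriviallyNormedField 𝕜] {F : 𝕜 → 𝕜}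
    (hF : DominatesDerivs F) (hF₀ : ∀ x, F x ≠ 0) : DominatesDerivs F⁻¹ := by
  have hsmooth : ContDiff 𝕜 ∞ F⁻¹ := hF.contDiff.inv hF₀
  refine ⟨hsmooth, fun n => ?_⟩
  induction n using Nat.strong_induction_on with
  | _ n ih =>
    rcases n.eq_zero_or_pos with rfl | hn
    · simpa only [iteratedDeriv_zero] using isBigO_refl F⁻¹ ⊤
    have hleibniz (x : 𝕜) : F x * iteratedDeriv n F⁻¹ x =
        -∑ i ∈ Finset.range n,
          n.choose (i + 1) * iteratedDeriv (i + 1) F x * iteratedDeriv (n - (i + 1)) F⁻¹ x := by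
      have hprod : F * F⁻¹ = fun _ => 1 := funext fun x => mul_inv_cancel₀ (hF₀ x)
      have h := iteratedDeriv_mul (n := n) (x := x)
        (hF.contDiff.contDiffAt.of_le (mod_cast le_top))
        (hsmooth.contDiffAt.of_le (mod_cast le_top))
      rw [hprod, iteratedDeriv_const, if_neg hn.ne', Finset.sum_range_succ'] at h
      simp only [Nat.choose_zero_right, Nat.cast_one, one_mul, iteratedDeriv_zero,
        Nat.sub_zero] at h
      exact eq_neg_of_add_eq_zero_right h.symm
    have hbounded : (fun x => F x * iteratedDeriv n F⁻¹ x) =O[⊤] fun _ => (1 : 𝕜) := by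
      simp_rw [hleibniz]
      refine (IsBigO.fun_sum fun i hi => ?_).neg_left
      have hlt : n - (i + 1) < n := by have := Finset.mem_range.1 hi; omega
      refine (((hF.isBigO (i + 1)).const_mul_left _).mul (ih _ hlt)).congr_right fun x => ?_
      exact mul_inv_cancel₀ (hF₀ x)
    refine ((isBigO_refl F⁻¹ ⊤).mul hbounded).congr (fun x => ?_) fun x => mul_one _
    exact inv_mul_cancel_left₀ (hF₀ x) _

theorem dominatesDerivs_mgf {Ω : Type*} [MeasurableSpace Ω] {P : Measure Ω} [IsFiniteMeasure P]
    {X : Ω → ℝ} {M : ℝ} (hX : AEMeasurable X P) (hM : ∀ᵐ z ∂P, |X z| ≤ M) :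
    DominatesDerivs (mgf X P) := by
  have hint (t : ℝ) : Integrable (fun z => Real.exp (t * X z)) P :=
    integrable_exp_mul_of_mem_Icc hX (hM.mono fun _ => abs_le.1)
  have hset : interior (integrableExpSet X P) = univ := by
    rw [(eq_univ_of_forall hint : integrableExpSet X P = univ), interior_univ]
  refine ⟨?_, fun n => isBigO_top.2 ⟨M ^ n, fun t => ?_⟩⟩
  · exact contDiff_iff_contDiffAt.2 fun t =>
      (analyticAt_mgf (hset ▸ mem_univ t)).contDiffAt
  · rw [iteratedDeriv_mgf (hset ▸ mem_univ t), Real.norm_of_nonneg mgf_nonneg, mgf,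
      ← integral_const_mul]
    refine norm_integral_le_of_norm_le ((hint t).const_mul _) (hM.mono fun z hz => ?_)
    rw [norm_mul, norm_pow, Real.norm_eq_abs, Real.norm_of_nonneg (Real.exp_nonneg _)]
    gcongr

end DominatesDerivs

section ExpSlope

theorem mul_dslope_exp_zero (x : ℝ) : x * dslope Real.exp 0 x = Real.exp x - 1 := by
  simpa using sub_smul_dslope Real.exp 0 x

theorem dslope_exp_zero_eq_mgf :
    dslope Real.exp 0 = mgf id (volume.restrict (Ioc (0 : ℝ) 1)) := by
  ext x
  have hint : mgf id (volume.restrict (Ioc (0 : ℝ) 1)) x = ∫ t in (0 : ℝ)..1, Real.exp (x * t) := by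
    rw [intervalIntegral.integral_of_le zero_le_one]
    rfl
  rw [hint]
  rcases eq_or_ne x 0 with rfl | hx
  · simp
  · rw [intervalIntegral.integral_comp_mul_left _ hx, integral_exp, dslope_of_ne _ hx,
      slope_def_field]
    simp [div_eq_inv_mul]

theorem dominatesDerivs_dslope_exp_zero : DominatesDerivs (dslope Real.exp 0) := by
  rw [dslope_exp_zero_eq_mgf]
  refine dominatesDerivs_mgf (M := 1) aemeasurable_id ?_
  filter_upwards [ae_restrict_mem measurableSet_Ioc] with t ht
  exact (abs_of_pos ht.1).trans_le ht.2

theorem dslope_exp_zero_le_exp_max (x : ℝ) : dslope Real.exp 0 x ≤ Real.exp (max x 0) := by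
  have hslope := mul_dslope_exp_zero x
  rcases lt_trichotomy x 0 with hx | rfl | hx
  · rw [max_eq_right hx.le, Real.exp_zero]
    refine (mul_le_mul_left_of_neg hx).1 ?_
    linarith [Real.add_one_le_exp x]
  · simp
  · rw [max_eq_left hx.le]
    refine le_of_mul_le_mul_left ?_ hx
    have hexp : Real.exp (-x) * Real.exp x = 1 := by rw [← Real.exp_add]; simp
    nlinarith [mul_le_mul_of_nonneg_right (Real.one_sub_le_exp_neg x) (Real.exp_nonneg x)]

theorem one_le_one_add_abs_mul_dslope_exp_zero (x : ℝ) :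
    1 ≤ (1 + |x|) * dslope Real.exp 0 x := by
  have hslope := mul_dslope_exp_zero x
  rcases lt_trichotomy x 0 with hx | rfl | hx
  · rw [abs_of_neg hx]
    refine (mul_le_mul_left_of_neg hx).1 ?_
    have hexp : Real.exp (-x) * Real.exp x = 1 := by rw [← Real.exp_add]; simp
    have hle : (1 - x) * Real.exp x ≤ 1 :=
      (mul_le_mul_of_nonneg_right (Real.one_sub_le_exp_neg x) (Real.exp_nonneg x)).trans_eq hexp
    linear_combination hle + (1 - x) * hslope
  · simp
  · rw [abs_of_pos hx]
    refine le_of_mul_le_mul_left ?_ hx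
    have hle : (1 + x) * x ≤ (1 + x) * (Real.exp x - 1) :=
      mul_le_mul_of_nonneg_left (by linarith [Real.add_one_le_exp x]) (by positivity)
    linear_combination hle + sq_nonneg x - (1 + x) * hslope

theorem dslope_exp_zero_pos (x : ℝ) : 0 < dslope Real.exp 0 x :=
  pos_of_mul_pos_right (one_pos.trans_le (one_le_one_add_abs_mul_dslope_exp_zero x))
    (by positivity)

theorem inv_dslope_exp_zero_le (x : ℝ) : (dslope Real.exp 0 x)⁻¹ ≤ 1 + |x| :=
  (inv_le_iff_one_le_mul₀ (dslope_exp_zero_pos x)).2 (one_le_one_add_abs_mul_dslope_exp_zero x)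

theorem omegaComp_eq_neg_log_mul_dslope_exp {s : ℝ} (hs : 0 < s) (α : ℝ) :
    omegaComp s α = -Real.log s * dslope Real.exp 0 (α * -Real.log s) := by
  rw [omegaComp]
  split_ifs with hα
  · simp [hα]
  · have hslope := mul_dslope_exp_zero (α * -Real.log s)
    rw [Real.rpow_def_of_pos hs, div_eq_iff hα, show Real.log s * -α = α * -Real.log s by ring]
    linear_combination -hslope

end ExpSlope

section LogGrowth

theorem neg_log_rpow_isBigO_rpow (r : ℝ) {q : ℝ} (hq : q < 0) :
    (fun s : ℝ => (-Real.log s) ^ r) =O[𝓝[>] 0] fun s => s ^ q := by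
  refine (isLittleO_abs_log_rpow_rpow_nhdsGT_zero r hq).isBigO.congr' ?_ .rfl
  filter_upwards [Ioo_mem_nhdsGT one_pos] with s hs
  rw [abs_of_neg (Real.log_neg hs.1 hs.2)]

variable {X : Type*} [TopologicalSpace X] {a : X → ℝ} {x₀ : X} {d : ℝ}

theorem dslope_exp_zero_comp_neg_log_isBigO (ha : ContinuousAt a x₀) (hd : 0 ≤ d) (had : a x₀ < d) :
    (fun p : ℝ × X => dslope Real.exp 0 (a p.2 * -Real.log p.1)) =O[𝓝[>] 0 ×ˢ 𝓝 x₀]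
      fun p => p.1 ^ (-d) := by
  refine IsBigO.of_norm_eventuallyLE ?_
  have hp : ∀ᶠ p : ℝ × X in 𝓝[>] 0 ×ˢ 𝓝 x₀, p.1 ∈ Ioo (0 : ℝ) 1 ∧ a p.2 < d :=
    Eventually.prod_mk (Ioo_mem_nhdsGT one_pos) (ha.eventually_lt_const had)
  filter_upwards [hp] with p ⟨hp, hap⟩
  have hlog : 0 ≤ -Real.log p.1 := neg_nonneg.2 (Real.log_neg hp.1 hp.2).le
  calc ‖dslope Real.exp 0 (a p.2 * -Real.log p.1)‖
      = dslope Real.exp 0 (a p.2 * -Real.log p.1) :=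
        Real.norm_of_nonneg (dslope_exp_zero_pos _).le
    _ ≤ Real.exp (max (a p.2 * -Real.log p.1) 0) := dslope_exp_zero_le_exp_max _
    _ ≤ Real.exp (d * -Real.log p.1) := by
        gcongr
        exact max_le (mul_le_mul_of_nonneg_right hap.le hlog) (mul_nonneg hd hlog)
    _ = p.1 ^ (-d) := by rw [Real.rpow_def_of_pos hp.1]; ring_nf

theorem inv_dslope_exp_zero_comp_neg_log_isBigO (ha : ContinuousAt a x₀) (hd : 0 < d) :
    (fun p : ℝ × X => (dslope Real.exp 0)⁻¹ (a p.2 * -Real.log p.1)) =O[𝓝[>] 0 ×ˢ 𝓝 x₀]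
      fun p => p.1 ^ (-d) := by
  have hpow (r : ℝ) : (fun p : ℝ × X => (-Real.log p.1) ^ r) =O[𝓝[>] 0 ×ˢ 𝓝 x₀]
      fun p => p.1 ^ (-d) :=
    (neg_log_rpow_isBigO_rpow r (neg_neg_iff_pos.2 hd)).comp_tendsto tendsto_fst
  have hone : (fun _ : ℝ × X => (1 : ℝ)) =O[𝓝[>] 0 ×ˢ 𝓝 x₀] fun p => p.1 ^ (-d) := by
    simpa using hpow 0
  have harg : (fun p : ℝ × X => a p.2 * -Real.log p.1) =O[𝓝[>] 0 ×ˢ 𝓝 x₀]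
      fun p => p.1 ^ (-d) := by
    simpa using ((ha.tendsto.isBigO_one ℝ).comp_tendsto tendsto_snd).mul (hpow 1)
  refine IsBigO.trans (isBigO_of_le _ fun p => ?_) (hone.add harg.norm_left)
  rw [Pi.inv_apply, Real.norm_of_nonneg (inv_nonneg.2 (dslope_exp_zero_pos _).le),
    Real.norm_of_nonneg (by positivity)]
  exact inv_dslope_exp_zero_le _

end LogGrowth

section LogCompSum

variable {N : ℕ}

/-- The function `c(μ) s^p L^r F^{(n)}(a(μ) L)` with `L = -log s`. -/
noncomputable def logCompTerm (F : ℝ → ℝ) (a : (Fin N → ℝ) → ℝ) (p : ℝ) (c : (Fin N → ℝ) → ℝ)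
    (r : ℝ) (n : ℕ) (s : ℝ) (μ : Fin N → ℝ) : ℝ :=
  c μ * (s ^ p * (-Real.log s) ^ r * iteratedDeriv n F (a μ * -Real.log s))

/-- The functions of `(s, μ)` that agree for `0 < s < 1` with a finite sum of terms
`c(μ) s^p L^r F^{(n)}(a(μ) L)` with `c` smooth. The exponent `p` is the same in all terms, so that
`∂/∂s` lowers it by one and `∂/∂μᵢ` preserves it. -/
inductive LogCompSum (F : ℝ → ℝ) (a : (Fin N → ℝ) → ℝ) (p : ℝ) : (ℝ → (Fin N → ℝ) → ℝ) → Prop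
  | term {c : (Fin N → ℝ) → ℝ} (hc : ContDiff ℝ ∞ c) (r : ℝ) (n : ℕ) :
      LogCompSum F a p (logCompTerm F a p c r n)
  | add {φ ψ : ℝ → (Fin N → ℝ) → ℝ} :
      LogCompSum F a p φ → LogCompSum F a p ψ → LogCompSum F a p (φ + ψ)
  | of_eqOn {φ ψ : ℝ → (Fin N → ℝ) → ℝ} :
      LogCompSum F a p φ → EqOn ψ φ (Ioo 0 1) → LogCompSum F a p ψ

theorem hasDerivAt_iteratedDeriv {𝕜 E : Type*} [NontriviallyNormedField 𝕜] [NormedAddCommGroup E]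
    [NormedSpace 𝕜 E] {f : 𝕜 → E} {n : ℕ} (hf : ContDiff 𝕜 (n + 1) f) (x : 𝕜) :
    HasDerivAt (iteratedDeriv n f) (iteratedDeriv (n + 1) f x) x := by
  rw [iteratedDeriv_succ]
  exact (hf.differentiable_iteratedDeriv n (mod_cast n.lt_succ_self) x).hasDerivAt

variable {F : ℝ → ℝ} {a c : (Fin N → ℝ) → ℝ} {p : ℝ} {φ ψ : ℝ → (Fin N → ℝ) → ℝ}

theorem contDiffOn_logCompTerm (hF : ContDiff ℝ ∞ F) (ha : ContDiff ℝ ∞ a) (hc : ContDiff ℝ ∞ c)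
    (r : ℝ) (n : ℕ) :
    ContDiffOn ℝ ∞ (fun x : ℝ × (Fin N → ℝ) => logCompTerm F a p c r n x.1 x.2)
      (Ioo 0 1 ×ˢ univ) := by
  have hlog : ContDiffOn ℝ ∞ (fun x : ℝ × (Fin N → ℝ) => -Real.log x.1) (Ioo 0 1 ×ˢ univ) :=
    (contDiff_fst.contDiffOn.log fun x hx => hx.1.1.ne').neg
  have hFn : ContDiff ℝ ∞ (iteratedDeriv n F) := by
    rw [iteratedDeriv_eq_iterate]
    exact hF.iterate_deriv n
  refine (hc.comp contDiff_snd).contDiffOn.mul (ContDiffOn.mul (ContDiffOn.mul ?_ ?_) ?_)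
  · exact contDiff_fst.contDiffOn.rpow_const_of_ne fun x hx => hx.1.1.ne'
  · exact hlog.rpow_const_of_ne fun x hx => neg_ne_zero.2 (Real.log_neg hx.1.1 hx.1.2).ne
  · exact hFn.comp_contDiffOn ((ha.comp contDiff_snd).contDiffOn.mul hlog)

theorem LogCompSum.contDiffOn (hF : ContDiff ℝ ∞ F) (ha : ContDiff ℝ ∞ a)
    (hψ : LogCompSum F a p ψ) :
    ContDiffOn ℝ ∞ (fun x : ℝ × (Fin N → ℝ) => ψ x.1 x.2) (Ioo 0 1 ×ˢ univ) := by
  induction hψ with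
  | term hc r n => exact contDiffOn_logCompTerm hF ha hc r n
  | add _ _ ihφ ihψ => exact ihφ.add ihψ
  | of_eqOn _ heq ih => exact ih.congr fun x hx => congrFun (heq hx.1) x.2

theorem LogCompSum.differentiableAt (hF : ContDiff ℝ ∞ F) (ha : ContDiff ℝ ∞ a)
    (hψ : LogCompSum F a p ψ) {s : ℝ} (hs : s ∈ Ioo 0 1) (μ : Fin N → ℝ) :
    DifferentiableAt ℝ (fun x : ℝ × (Fin N → ℝ) => ψ x.1 x.2) (s, μ) :=
  ((hψ.contDiffOn hF ha).contDiffAt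
    ((isOpen_Ioo.prod isOpen_univ).mem_nhds ⟨hs, mem_univ μ⟩)).differentiableAt (by simp)

theorem dS_logCompTerm (hF : ContDiff ℝ ∞ F) (r : ℝ) (n : ℕ) :
    EqOn (dS (logCompTerm F a p c r n))
      (logCompTerm F a (p - 1) (fun μ => p * c μ) r n +
        (logCompTerm F a (p - 1) (fun μ => -r * c μ) (r - 1) n +
          logCompTerm F a (p - 1) (fun μ => -a μ * c μ) r (n + 1))) (Ioo 0 1) := by
  intro s hs
  ext μ
  have hs₀ : s ≠ 0 := hs.1.ne'
  have hlog : HasDerivAt (fun t => -Real.log t) (-s⁻¹) s := (Real.hasDerivAt_log hs₀).neg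
  have hlog₀ : -Real.log s ≠ 0 := neg_ne_zero.2 (Real.log_neg hs.1 hs.2).ne
  have hFn : HasDerivAt (iteratedDeriv n F) (iteratedDeriv (n + 1) F (a μ * -Real.log s))
      (a μ * -Real.log s) := hasDerivAt_iteratedDeriv (hF.of_le (mod_cast le_top)) _
  have hderiv := ((((hasDerivAt_id s).rpow_const (p := p) (.inl hs₀)).mul
    (hlog.rpow_const (p := r) (.inl hlog₀))).mul
    (hFn.comp s (hlog.const_mul (a μ)))).const_mul (c μ)
  refine (HasDerivAt.deriv hderiv).trans ?_
  simp only [logCompTerm, Pi.add_apply, Pi.mul_apply, id, Function.comp_apply,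
    Real.rpow_sub_one hs₀]
  field_simp
  ring

theorem dMu_logCompTerm (hF : ContDiff ℝ ∞ F) (ha : ContDiff ℝ ∞ a) (hc : ContDiff ℝ ∞ c)
    (r : ℝ) (n : ℕ) (i : Fin N) :
    EqOn (dMu i (logCompTerm F a p c r n))
      (logCompTerm F a p (fun μ => fderiv ℝ c μ (Pi.single i 1)) r n +
        logCompTerm F a p (fun μ => c μ * fderiv ℝ a μ (Pi.single i 1)) (r + 1) (n + 1))
      (Ioo 0 1) := by
  intro s hs
  ext μ
  have hlog₀ : -Real.log s ≠ 0 := neg_ne_zero.2 (Real.log_neg hs.1 hs.2).ne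
  have ha' := (ha.differentiable (by simp) μ).hasFDerivAt
  have hc' := (hc.differentiable (by simp) μ).hasFDerivAt
  have hFn : HasDerivAt (iteratedDeriv n F) (iteratedDeriv (n + 1) F (a μ * -Real.log s))
      (a μ * -Real.log s) := hasDerivAt_iteratedDeriv (hF.of_le (mod_cast le_top)) _
  have hderiv := hc'.mul ((hFn.comp_hasFDerivAt μ
    (ha'.mul_const (-Real.log s))).const_mul (s ^ p * (-Real.log s) ^ r))
  refine (congrArg (· (Pi.single i 1)) (HasFDerivAt.fderiv hderiv)).trans ?_
  simp only [logCompTerm, Pi.add_apply, Function.comp_apply, Real.rpow_add_one hlog₀,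
    add_apply, smul_apply, smul_eq_mul]
  ring

theorem LogCompSum.dS (hF : ContDiff ℝ ∞ F) (ha : ContDiff ℝ ∞ a) (hψ : LogCompSum F a p ψ) :
    LogCompSum F a (p - 1) (dS ψ) := by
  induction hψ with
  | term hc r n =>
    refine .of_eqOn (.add (.term ?_ _ _) (.add (.term ?_ _ _) (.term ?_ _ _)))
      (dS_logCompTerm hF r n) <;> fun_prop
  | add hφ hψ ihφ ihψ =>
    refine (ihφ.add ihψ).of_eqOn fun s hs => funext fun μ => deriv_fun_add ?_ ?_
    · exact (hφ.differentiableAt hF ha hs μ).comp s (by fun_prop : DifferentiableAt ℝ (·, μ) s)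
    · exact (hψ.differentiableAt hF ha hs μ).comp s (by fun_prop : DifferentiableAt ℝ (·, μ) s)
  | of_eqOn _ heq ih =>
    refine ih.of_eqOn fun s hs => funext fun μ => EventuallyEq.deriv_eq ?_
    filter_upwards [isOpen_Ioo.mem_nhds hs] with t ht using congrFun (heq ht) μ

theorem LogCompSum.dMu (hF : ContDiff ℝ ∞ F) (ha : ContDiff ℝ ∞ a) (hψ : LogCompSum F a p ψ)
    (i : Fin N) : LogCompSum F a p (dMu i ψ) := by
  have hsmooth {f : (Fin N → ℝ) → ℝ} (hf : ContDiff ℝ ∞ f) :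
      ContDiff ℝ ∞ fun μ => fderiv ℝ f μ (Pi.single i 1) :=
    (hf.fderiv_right (by simp)).clm_apply contDiff_const
  induction hψ with
  | term hc r n =>
    exact .of_eqOn (.add (.term (hsmooth hc) _ _) (.term (hc.mul (hsmooth ha)) _ _))
      (dMu_logCompTerm hF ha hc r n i)
  | add hφ hψ ihφ ihψ =>
    refine (ihφ.add ihψ).of_eqOn fun s hs => funext fun μ =>
      congrArg (fun D : (Fin N → ℝ) →L[ℝ] ℝ => D (Pi.single i 1)) (fderiv_add ?_ ?_)
    · exact (hφ.differentiableAt hF ha hs μ).comp μ (by fun_prop : DifferentiableAt ℝ (s, ·) μ)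
    · exact (hψ.differentiableAt hF ha hs μ).comp μ (by fun_prop : DifferentiableAt ℝ (s, ·) μ)
  | of_eqOn _ heq ih =>
    exact ih.of_eqOn fun s hs => funext fun μ =>
      congrArg (fun f => fderiv ℝ f μ (Pi.single i 1)) (heq hs)

theorem LogCompSum.mixedDeriv (hF : ContDiff ℝ ∞ F) (ha : ContDiff ℝ ∞ a)
    (hψ : LogCompSum F a p ψ) (ν0 : ℕ) (ν : Fin N → ℕ) :
    LogCompSum F a (p - ν0) (mixedDeriv ν0 ν ψ) := by
  rw [_root_.mixedDeriv]
  have hMu : LogCompSum F a p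
      ((List.finRange N).foldr (fun i φ => (_root_.dMu i)^[ν i] φ) ψ) :=
    List.foldrRecOn _ _ hψ fun _ hφ i _ =>
      Function.Iterate.rec _ hφ (fun _ h => h.dMu hF ha i) (ν i)
  induction ν0 with
  | zero => simpa using hMu
  | succ m ih =>
    rw [Function.iterate_succ_apply', Nat.cast_succ, ← sub_sub]
    exact ih.dS hF ha

variable {μ₀ : Fin N → ℝ} {q ℓ : ℝ}

theorem logCompTerm_isBigO (hF : DominatesDerivs F) (hc : ContinuousAt c μ₀) (r : ℝ) (n : ℕ)
    (hFa : (fun x : ℝ × (Fin N → ℝ) => F (a x.2 * -Real.log x.1)) =O[𝓝[>] 0 ×ˢ 𝓝 μ₀]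
      fun x => x.1 ^ q) (hℓ : ℓ < p + q) :
    (fun x : ℝ × (Fin N → ℝ) => logCompTerm F a p c r n x.1 x.2) =O[𝓝[>] 0 ×ˢ 𝓝 μ₀]
      fun x => x.1 ^ ℓ := by
  have hcoeff : (fun x : ℝ × (Fin N → ℝ) => c x.2) =O[𝓝[>] 0 ×ˢ 𝓝 μ₀] fun _ => (1 : ℝ) :=
    (hc.tendsto.isBigO_one ℝ).comp_tendsto tendsto_snd
  have hlog : (fun x : ℝ × (Fin N → ℝ) => (-Real.log x.1) ^ r) =O[𝓝[>] 0 ×ˢ 𝓝 μ₀]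
      fun x => x.1 ^ (ℓ - (p + q)) :=
    (neg_log_rpow_isBigO_rpow r (sub_neg.2 hℓ)).comp_tendsto tendsto_fst
  have hcomp := ((hF.isBigO n).comp_tendsto tendsto_top).trans hFa
  have hpow := isBigO_refl (fun x : ℝ × (Fin N → ℝ) => x.1 ^ p) (𝓝[>] 0 ×ˢ 𝓝 μ₀)
  refine (hcoeff.mul ((hpow.mul hlog).mul hcomp)).trans_eventuallyEq ?_
  have hpos : ∀ᶠ x : ℝ × (Fin N → ℝ) in 𝓝[>] 0 ×ˢ 𝓝 μ₀, 0 < x.1 :=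
    tendsto_fst.eventually self_mem_nhdsWithin
  filter_upwards [hpos] with x hx
  rw [one_mul, ← Real.rpow_add hx, ← Real.rpow_add hx]
  ring_nf

theorem LogCompSum.isBigO (hF : DominatesDerivs F)
    (hFa : (fun x : ℝ × (Fin N → ℝ) => F (a x.2 * -Real.log x.1)) =O[𝓝[>] 0 ×ˢ 𝓝 μ₀]
      fun x => x.1 ^ q) (hℓ : ℓ < p + q) (hψ : LogCompSum F a p ψ) :
    (fun x : ℝ × (Fin N → ℝ) => ψ x.1 x.2) =O[𝓝[>] 0 ×ˢ 𝓝 μ₀] fun x => x.1 ^ ℓ := by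
  induction hψ with
  | term hc r n => exact logCompTerm_isBigO hF hc.continuous.continuousAt r n hFa hℓ
  | add _ _ ihφ ihψ => exact ihφ.add ihψ
  | of_eqOn _ heq ih =>
    have hs : ∀ᶠ x : ℝ × (Fin N → ℝ) in 𝓝[>] 0 ×ˢ 𝓝 μ₀, x.1 ∈ Ioo (0 : ℝ) 1 :=
      tendsto_fst.eventually (Ioo_mem_nhdsGT one_pos)
    refine ih.congr' ?_ .rfl
    filter_upwards [hs] with x hx using (congrFun (heq hx) x.2).symm

theorem exists_nhds_forall_abs_le_of_isBigO {X : Type*} [TopologicalSpace X] {x₀ : X}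
    {f : ℝ → X → ℝ} (hf : (fun x : ℝ × X => f x.1 x.2) =O[𝓝[>] 0 ×ˢ 𝓝 x₀] fun x => x.1 ^ ℓ) :
    ∃ V ∈ 𝓝 x₀, ∃ C > 0, ∃ s₀ > 0, ∀ x ∈ V, ∀ s ∈ Ioo (0 : ℝ) s₀, |f s x| ≤ C * s ^ ℓ := by
  obtain ⟨C, hC, hfC⟩ := hf.exists_pos
  obtain ⟨S, hS, V, hV, hSV⟩ := mem_prod_iff.1 hfC.bound
  obtain ⟨s₀, hs₀, hsub⟩ := mem_nhdsGT_iff_exists_Ioo_subset.1 hS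
  refine ⟨V, hV, C, hC, s₀, hs₀, fun x hx s hs => ?_⟩
  have hbound : ‖f s x‖ ≤ C * ‖s ^ ℓ‖ := hSV (mk_mem_prod (hsub hs) hx)
  rwa [Real.norm_of_nonneg (Real.rpow_nonneg hs.1.le ℓ)] at hbound

theorem LogCompSum.memF (hF : DominatesDerivs F) (ha : ContDiff ℝ ∞ a)
    (hFa : (fun x : ℝ × (Fin N → ℝ) => F (a x.2 * -Real.log x.1)) =O[𝓝[>] 0 ×ˢ 𝓝 μ₀]
      fun x => x.1 ^ q) (hℓ : ℓ < p + q) (hψ : LogCompSum F a p ψ) :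
    MemF ⊤ ℓ univ μ₀ ψ := by
  refine ⟨⟨1, one_pos, hψ.contDiffOn hF.contDiff ha⟩, fun ν0 ν _ => ?_⟩
  obtain ⟨V, hV, hbound⟩ := exists_nhds_forall_abs_le_of_isBigO
    ((hψ.mixedDeriv hF.contDiff ha ν0 ν).isBigO hF hFa (by linarith : ℓ - ν0 < p - ν0 + q))
  exact ⟨V, subset_univ V, hV, hbound⟩

end LogCompSum

section Compensator

variable {N : ℕ} (a : (Fin N → ℝ) → ℝ)

theorem logCompSum_omegaComp :
    LogCompSum (dslope Real.exp 0) a 0 (fun s μ => omegaComp s (a μ)) :=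
  .of_eqOn (.term (contDiff_const (c := 1)) 1 0) fun s hs => funext fun μ => by
    simp [logCompTerm, omegaComp_eq_neg_log_mul_dslope_exp hs.1]

theorem logCompSum_one_div_omegaComp :
    LogCompSum (dslope Real.exp 0)⁻¹ a 0 (fun s μ => 1 / omegaComp s (a μ)) :=
  .of_eqOn (.term (contDiff_const (c := 1)) (-1) 0) fun s hs => funext fun μ => by
    simp [logCompTerm, omegaComp_eq_neg_log_mul_dslope_exp hs.1, Real.rpow_neg_one, mul_comm]

variable {a}

theorem omegaComp_mem_flat_general (ha : ContDiff ℝ ∞ a) {δ : ℝ} (hδ : 0 < δ) :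
    MemFSet ⊤ (-δ) univ {μ | a μ < δ} (fun s μ => omegaComp s (a μ)) ∧
    MemFSet ⊤ (-δ) univ univ (fun s μ => 1 / omegaComp s (a μ)) := by
  constructor
  · intro μ₀ hμ₀
    obtain ⟨d, hd, hdδ⟩ := exists_between (max_lt hδ hμ₀)
    obtain ⟨hd₀, had⟩ := max_lt_iff.1 hd
    exact (logCompSum_omegaComp a).memF dominatesDerivs_dslope_exp_zero ha
      (dslope_exp_zero_comp_neg_log_isBigO ha.continuous.continuousAt hd₀.le had) (by linarith)
  · intro μ₀ _
    obtain ⟨d, hd₀, hdδ⟩ := exists_between hδ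
    exact (logCompSum_one_div_omegaComp a).memF
      (dominatesDerivs_dslope_exp_zero.inv fun x => (dslope_exp_zero_pos x).ne') ha
      (inv_dslope_exp_zero_comp_neg_log_isBigO ha.continuous.continuousAt hd₀) (by linarith)

end Compensator

/-- Lemma 3.6 (third item): ω and 1/ω belong to 𝓕^∞_{−δ}({α < δ}). -/
theorem omegaComp_mem_flat (δ : ℝ) (hδ : 0 < δ) :
    MemFSet (⊤ : ℕ∞) (-δ) (Set.univ) {μ : Fin 1 → ℝ | μ 0 < δ}
      (fun s μ => omegaComp s (μ 0)) ∧
    MemFSet (⊤ : ℕ∞) (-δ) (Set.univ) {μ : Fin 1 → ℝ | μ 0 < δ}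
      (fun s μ => 1 / omegaComp s (μ 0)) :=
  (omegaComp_mem_flat_general (contDiff_apply ℝ ℝ (0 : Fin 1)) hδ).imp_right
    fun h μ₀ _ => h μ₀ (mem_univ μ₀)
end

section
/- Let U ⊆ ℝ^N be open, μ0 ∈ U, and let λ, Δ, Ω ∈ C^∞(U) with λ > 0 and Δ > 0; set ρ = 1/λ, λ^0 = λ(μ0), ρ^0 = 1/λ^0. Let D(s;μ) be a family of functions, defined and strictly positive for μ ∈ U and all sufficiently small s > 0, which for each μ is invertible with respect to s near s = 0 with inverse D^{-1}(·;μ) (so D^{-1}(D(s;μ);μ) = s for small s > 0). Assume that for every ℓ ∈ (0, min{λ^0, 1}) there is R ∈ 𝓕^∞_ℓ(μ0) with D(s;μ) = s^{λ(μ)}(Δ(μ) + R(s;μ)), and for every η ∈ (0, min{ρ^0, 1}) there is R' ∈ 𝓕^∞_η(μ0) with D^{-1}(s;μ) = s^{ρ(μ)}(Ω(μ) + R'(s;μ)). Then Ω = Δ^{−ρ} on a neighborhood of μ0. -/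
/-!
A remainder that is flat of positive order tends to `0` as `s → 0⁺`, so the hypotheses say that
`D(s) / s ^ λ → Δ` and `D⁻¹(t) / t ^ (1/λ) → Ω` for each parameter near `μ0`. Since `D(s) → 0⁺`,
we may put `t = D(s)` in the second limit; as `D⁻¹(D(s)) = s`, it becomes
`s / D(s) ^ (1/λ) = (D(s) / s ^ λ) ^ (-1/λ) → Ω`, while the first limit gives `Δ ^ (-1/λ)`.
-/

open Topology Filter Set

theorem tendsto_rpow_nhdsGT_zero {a : ℝ} (ha : 0 < a) :
    Tendsto (fun s : ℝ => s ^ a) (𝓝[>] 0) (𝓝 0) := by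
  simpa only [Real.zero_rpow ha.ne'] using
    (Real.continuousAt_rpow_const 0 a (Or.inr ha.le)).tendsto.mono_left nhdsWithin_le_nhds

section LeadingCoefficient

variable {f g : ℝ → ℝ} {a c d : ℝ}

theorem tendsto_nhdsGT_zero_of_tendsto_div_rpow (ha : 0 < a) (hc : 0 < c)
    (hf : Tendsto (fun s => f s / s ^ a) (𝓝[>] 0) (𝓝 c)) :
    Tendsto f (𝓝[>] 0) (𝓝[>] 0) := by
  have hfactor : ∀ᶠ s in 𝓝[>] 0, f s / s ^ a * s ^ a = f s := by
    filter_upwards [self_mem_nhdsWithin] with s hs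
    exact div_mul_cancel₀ _ (Real.rpow_pos_of_pos hs a).ne'
  refine tendsto_nhdsWithin_iff.mpr ⟨?_, ?_⟩
  · simpa only [mul_zero] using (hf.mul (tendsto_rpow_nhdsGT_zero ha)).congr' hfactor
  · filter_upwards [self_mem_nhdsWithin, hf.eventually_const_lt hc] with s hs hpos
    exact (div_pos_iff_of_pos_right (Real.rpow_pos_of_pos hs a)).mp hpos

theorem leadingCoeff_eq_of_leftInverse (ha : 0 < a) (hc : 0 < c)
    (hf : Tendsto (fun s => f s / s ^ a) (𝓝[>] 0) (𝓝 c))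
    (hg : Tendsto (fun t => g t / t ^ a⁻¹) (𝓝[>] 0) (𝓝 d))
    (hgf : ∀ᶠ s in 𝓝[>] 0, g (f s) = s) :
    d = c ^ (-a⁻¹) := by
  have hf0 := tendsto_nhdsGT_zero_of_tendsto_div_rpow ha hc hf
  have hsubst : ∀ᶠ s in 𝓝[>] 0, (f s / s ^ a) ^ (-a⁻¹) = g (f s) / f s ^ a⁻¹ := by
    filter_upwards [self_mem_nhdsWithin, hf0 self_mem_nhdsWithin, hgf] with s hs hfs hgfs
    have hs0 : 0 ≤ s := le_of_lt hs
    have hfs0 : 0 ≤ f s := le_of_lt hfs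
    rw [hgfs, Real.rpow_neg (by positivity), Real.div_rpow hfs0 (by positivity),
      Real.rpow_rpow_inv hs0 ha.ne', inv_div]
  exact tendsto_nhds_unique (hg.comp hf0) ((hf.rpow_const (Or.inl hc.ne')).congr' hsubst)

end LeadingCoefficient

section Flatness

variable {N : ℕ} {K : ℕ∞} {U : Set (Fin N → ℝ)} {μ0 : Fin N → ℝ}

theorem mixedDeriv_zero (ψ : ℝ → (Fin N → ℝ) → ℝ) : mixedDeriv 0 0 ψ = ψ := by
  simp [mixedDeriv]

theorem MemF.eventually_mem_and_tendsto_zero {L : ℝ} {ψ : ℝ → (Fin N → ℝ) → ℝ}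
    (hψ : MemF K L U μ0 ψ) (hL : 0 < L) :
    ∀ᶠ μ in 𝓝 μ0, μ ∈ U ∧ Tendsto (fun s => ψ s μ) (𝓝[>] 0) (𝓝 0) := by
  obtain ⟨V, hVU, hV, C, -, s0, hs0, hbound⟩ := hψ.2 0 0 (by simp)
  filter_upwards [hV] with μ hμ
  have hlim : Tendsto (fun s : ℝ => C * s ^ L) (𝓝[>] 0) (𝓝 0) := by
    simpa only [mul_zero] using (tendsto_rpow_nhdsGT_zero hL).const_mul C
  refine ⟨hVU hμ, squeeze_zero_norm' ?_ hlim⟩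
  filter_upwards [Ioo_mem_nhdsGT hs0] with s hs
  simpa only [Real.norm_eq_abs, mixedDeriv_zero, Nat.cast_zero, sub_zero] using hbound μ hμ s hs

/-- The family `f` has near `μ0` the expansion `f(s;μ) = s ^ a(μ) * (c(μ) + R(s;μ))` with leading
exponent `a`, leading coefficient `c` and a remainder `R` in the flatness class of some positive
order; the range of `s` on which it holds may depend on `μ`. -/
def HasFlatExpansion (K : ℕ∞) (U : Set (Fin N → ℝ)) (μ0 : Fin N → ℝ)
    (f : ℝ → (Fin N → ℝ) → ℝ) (a c : (Fin N → ℝ) → ℝ) : Prop :=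
  ∃ L > 0, ∃ R, MemF K L U μ0 R ∧
    ∀ μ ∈ U, ∀ᶠ s in 𝓝[>] 0, f s μ = s ^ a μ * (c μ + R s μ)

namespace HasFlatExpansion

variable {f : ℝ → (Fin N → ℝ) → ℝ} {a c : (Fin N → ℝ) → ℝ}

theorem of_forall_order {b : ℝ} (hb : 0 < b)
    (hf : ∀ L ∈ Ioo 0 b, ∃ R, MemF K L U μ0 R ∧
      ∃ s0 > 0, ∀ μ ∈ U, ∀ s ∈ Ioo 0 s0, f s μ = s ^ a μ * (c μ + R s μ)) :
    HasFlatExpansion K U μ0 f a c := by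
  obtain ⟨L, hL⟩ := exists_between hb
  obtain ⟨R, hR, s0, hs0, hfR⟩ := hf L hL
  exact ⟨L, hL.1, R, hR, fun μ hμ => mem_of_superset (Ioo_mem_nhdsGT hs0) (hfR μ hμ)⟩

theorem eventually_mem_and_tendsto_div_rpow (hf : HasFlatExpansion K U μ0 f a c) :
    ∀ᶠ μ in 𝓝 μ0, μ ∈ U ∧ Tendsto (fun s => f s μ / s ^ a μ) (𝓝[>] 0) (𝓝 (c μ)) := by
  obtain ⟨L, hL, R, hR, hfR⟩ := hf
  filter_upwards [hR.eventually_mem_and_tendsto_zero hL] with μ ⟨hμ, hRμ⟩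
  have hlim : Tendsto (fun s => c μ + R s μ) (𝓝[>] 0) (𝓝 (c μ)) := by
    simpa only [add_zero] using hRμ.const_add (c μ)
  refine ⟨hμ, hlim.congr' ?_⟩
  filter_upwards [self_mem_nhdsWithin, hfR μ hμ] with s hs hfs
  rw [hfs, mul_div_cancel_left₀ _ (Real.rpow_pos_of_pos hs (a μ)).ne']

end HasFlatExpansion

theorem dulac_inverse_leading_general {lam Δ Ω : (Fin N → ℝ) → ℝ}
    (hlam : ∀ μ ∈ U, 0 < lam μ) (hΔ : ∀ μ ∈ U, 0 < Δ μ) {D Dinv : ℝ → (Fin N → ℝ) → ℝ}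
    (hinv : ∀ μ ∈ U, ∀ᶠ s in 𝓝[>] 0, Dinv (D s μ) μ = s)
    (hD : HasFlatExpansion K U μ0 D lam Δ)
    (hDinv : HasFlatExpansion K U μ0 Dinv (fun μ => (lam μ)⁻¹) Ω) :
    ∃ V ⊆ U, V ∈ 𝓝 μ0 ∧ ∀ μ ∈ V, Ω μ = Δ μ ^ (-(lam μ)⁻¹) := by
  have hlimits :=
    hD.eventually_mem_and_tendsto_div_rpow.and hDinv.eventually_mem_and_tendsto_div_rpow
  refine ⟨_, fun μ hμ => hμ.1.1, hlimits, ?_⟩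
  rintro μ ⟨⟨hμ, hDμ⟩, -, hDinvμ⟩
  exact leadingCoeff_eq_of_leftInverse (hlam μ hμ) (hΔ μ hμ) hDμ hDinvμ (hinv μ hμ)

end Flatness

/-- Lemma 4.10: leading coefficient of the inverse of a Dulac map. -/
theorem dulac_inverse_leading {N : ℕ} (U : Set (Fin N → ℝ)) (hU : IsOpen U)
    (μ0 : Fin N → ℝ) (hμ0 : μ0 ∈ U)
    (lam Δ Ω : (Fin N → ℝ) → ℝ)
    (hlam : ContDiffOn ℝ (⊤ : ℕ∞) lam U) (hΔ : ContDiffOn ℝ (⊤ : ℕ∞) Δ U)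
    (hΩ : ContDiffOn ℝ (⊤ : ℕ∞) Ω U)
    (hlampos : ∀ μ ∈ U, 0 < lam μ) (hΔpos : ∀ μ ∈ U, 0 < Δ μ)
    (D Dinv : ℝ → (Fin N → ℝ) → ℝ)
    (hDpos : ∃ s0 > 0, ∀ μ ∈ U, ∀ s ∈ Set.Ioo (0:ℝ) s0, 0 < D s μ)
    (hinv : ∃ s0 > 0, ∀ μ ∈ U, ∀ s ∈ Set.Ioo (0:ℝ) s0, Dinv (D s μ) μ = s)
    (hD : ∀ ℓ ∈ Set.Ioo (0:ℝ) (min (lam μ0) 1),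
      ∃ R : ℝ → (Fin N → ℝ) → ℝ, MemF (⊤ : ℕ∞) ℓ U μ0 R ∧
        ∃ s0 > 0, ∀ μ ∈ U, ∀ s ∈ Set.Ioo (0:ℝ) s0,
          D s μ = s ^ lam μ * (Δ μ + R s μ))
    (hDinv : ∀ η ∈ Set.Ioo (0:ℝ) (min (lam μ0)⁻¹ 1),
      ∃ R' : ℝ → (Fin N → ℝ) → ℝ, MemF (⊤ : ℕ∞) η U μ0 R' ∧
        ∃ s0 > 0, ∀ μ ∈ U, ∀ s ∈ Set.Ioo (0:ℝ) s0,
          Dinv s μ = s ^ (lam μ)⁻¹ * (Ω μ + R' s μ)) :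
    ∃ V ⊆ U, V ∈ 𝓝 μ0 ∧ ∀ μ ∈ V, Ω μ = (Δ μ) ^ (-(lam μ)⁻¹) := by
  obtain ⟨s0, hs0, hinv⟩ := hinv
  have hlam0 := hlampos μ0 hμ0
  exact dulac_inverse_leading_general hlampos hΔpos
    (fun μ hμ => mem_of_superset (Ioo_mem_nhdsGT hs0) (hinv μ hμ))
    (.of_forall_order (lt_min hlam0 one_pos) hD)
    (.of_forall_order (lt_min (inv_pos.mpr hlam0) one_pos) hDinv)
end

section
/- Let U ⊆ ℝ^N be open, μ0 ∈ U, and let r, A ∈ C^∞(U) with A > 0, r > 0, r(μ0) = 1 and A(μ0) ≠ 1. Let ℓ ∈ (0, 1), let R ∈ 𝓕^∞_ℓ(μ0), and define 𝒟(s;μ) = s^{r(μ)}·(A(μ) − 1 + (1 − r(μ))·ω(s; r(μ) − 1) + R(s;μ)). Then there exist a neighborhood V ⊆ U of μ0 and ε > 0 such that for every μ ∈ V the function s ↦ 𝒟(s;μ) has at most one zero in the interval (0, ε). -/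
open Topology Filter Set

/-!
Since `(1 - r) * ω(s; r - 1) = 1 - s ^ (1 - r)`, the positive zeros of the displacement map are the
solutions of `f s = s ^ α`, where `f = A + R` and `α = 1 - r`. As `s → 0` and `μ → μ0`, flatness
of `R` gives `f → A μ0` and `s * log s * f' s → 0`.

In the logarithmic coordinate `log s`, two solutions `s₁ < s₂` are two points at which `log |f|`
meets the line of slope `α`, so the mean value theorem gives `ξ ∈ (s₁, s₂)` with
`α = ξ * f' ξ / f ξ`. Then `|α * log s₂| ≤ |α * log ξ| = |ξ * log ξ * f' ξ / f ξ|` is small, so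
`f s₂ = s₂ ^ α` is close to `1`, whereas `f` stays close to `A μ0 ≠ 1`.
-/

open Asymptotics

lemma exists_log_sub_log_mul_logDeriv_eq {f : ℝ → ℝ} {a b : ℝ} (ha : 0 < a) (hab : a < b)
    (hd : ∀ s ∈ Icc a b, DifferentiableAt ℝ f s) (hf : ∀ s ∈ Icc a b, f s ≠ 0) :
    ∃ ξ ∈ Ioo a b,
      (Real.log b - Real.log a) * (ξ * logDeriv f ξ) = Real.log (f b) - Real.log (f a) := by
  have hpos : ∀ s ∈ Icc a b, s ≠ 0 := fun s hs => (ha.trans_le hs.1).ne'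
  have hlogf : ∀ s ∈ Icc a b, HasDerivAt (fun t => Real.log (f t)) (logDeriv f s) s :=
    fun s hs => (hd s hs).hasDerivAt.log (hf s hs)
  have hlog : ∀ s ∈ Icc a b, HasDerivAt Real.log s⁻¹ s :=
    fun s hs => Real.hasDerivAt_log (hpos s hs)
  obtain ⟨ξ, hξ, hcauchy⟩ := exists_ratio_hasDerivAt_eq_ratio_slope _ _ hab
    (HasDerivAt.continuousOn hlogf) (fun s hs => hlogf s (Ioo_subset_Icc_self hs))
    _ _ (HasDerivAt.continuousOn hlog) (fun s hs => hlog s (Ioo_subset_Icc_self hs))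
  have hξ0 : ξ ≠ 0 := hpos ξ (Ioo_subset_Icc_self hξ)
  refine ⟨ξ, hξ, ?_⟩
  field_simp at hcauchy
  linear_combination hcauchy

lemma exists_mul_logDeriv_eq_of_eq_rpow {f : ℝ → ℝ} {a b α : ℝ} (ha : 0 < a) (hab : a < b)
    (hd : ∀ s ∈ Icc a b, DifferentiableAt ℝ f s) (hf : ∀ s ∈ Icc a b, f s ≠ 0)
    (hfa : f a = a ^ α) (hfb : f b = b ^ α) :
    ∃ ξ ∈ Ioo a b, ξ * logDeriv f ξ = α := by
  obtain ⟨ξ, hξ, h⟩ := exists_log_sub_log_mul_logDeriv_eq ha hab hd hf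
  rw [hfa, hfb, Real.log_rpow ha, Real.log_rpow (ha.trans hab), ← mul_sub, mul_comm α] at h
  exact ⟨ξ, hξ, mul_left_cancel₀ (sub_pos.2 (Real.log_lt_log ha hab)).ne' h⟩

lemma abs_rpow_sub_one_le {s α : ℝ} (hs : 0 < s) (h : |α * Real.log s| ≤ 1) :
    |s ^ α - 1| ≤ 2 * |α * Real.log s| := by
  rw [Real.rpow_def_of_pos hs, mul_comm (Real.log s)]
  exact Real.abs_exp_sub_one_le h

lemma subsingleton_setOf_eq_rpow {f : ℝ → ℝ} {S : Set ℝ} {η : ℝ} (α : ℝ) (hS : S.OrdConnected)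
    (hS01 : S ⊆ Ioo 0 1) (hη : η ≤ 1) (hd : ∀ s ∈ S, DifferentiableAt ℝ f s)
    (hf0 : ∀ s ∈ S, f s ≠ 0) (hlog : ∀ s ∈ S, |s * Real.log s * logDeriv f s| ≤ η)
    (hf1 : ∀ s ∈ S, 2 * η < |f s - 1|) :
    {s | s ∈ S ∧ f s = s ^ α}.Subsingleton := by
  rintro s₁ ⟨h₁, hz₁⟩ s₂ ⟨h₂, hz₂⟩
  by_contra hne
  wlog hlt : s₁ < s₂ generalizing s₁ s₂
  · exact this h₂ hz₂ h₁ hz₁ (Ne.symm hne) ((not_lt.1 hlt).lt_of_ne' hne)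
  have hsub : Icc s₁ s₂ ⊆ S := hS.out h₁ h₂
  obtain ⟨ξ, hξ, hα⟩ := exists_mul_logDeriv_eq_of_eq_rpow (hS01 h₁).1 hlt
    (fun s hs => hd s (hsub hs)) (fun s hs => hf0 s (hsub hs)) hz₁ hz₂
  have hξS : ξ ∈ S := hsub (Ioo_subset_Icc_self hξ)
  have hlog_le : |Real.log s₂| ≤ |Real.log ξ| := by
    rw [abs_of_neg (Real.log_neg (hS01 h₂).1 (hS01 h₂).2),
      abs_of_neg (Real.log_neg (hS01 hξS).1 (hS01 hξS).2)]
    exact neg_le_neg (Real.log_le_log (hS01 hξS).1 hξ.2.le)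
  have hsmall : |α * Real.log s₂| ≤ η :=
    calc |α * Real.log s₂| ≤ |α * Real.log ξ| := by
          rw [abs_mul, abs_mul]
          gcongr
      _ = |ξ * Real.log ξ * logDeriv f ξ| := by rw [← hα, mul_right_comm]
      _ ≤ η := hlog ξ hξS
  have hclose : |f s₂ - 1| ≤ 2 * |α * Real.log s₂| :=
    hz₂ ▸ abs_rpow_sub_one_le (hS01 h₂).1 (hsmall.trans hη)
  linarith [hf1 s₂ h₂]

lemma exists_eventually_subsingleton_setOf_eq_rpow {P : Type*} {l : Filter P} {f : ℝ → P → ℝ}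
    {a : ℝ} (α : P → ℝ) (ha0 : a ≠ 0) (ha1 : a ≠ 1)
    (hd : ∀ᶠ p in 𝓝[>] (0 : ℝ) ×ˢ l, DifferentiableAt ℝ (fun s => f s p.2) p.1)
    (hf : Tendsto (fun p => f p.1 p.2) (𝓝[>] (0 : ℝ) ×ˢ l) (𝓝 a))
    (hf' : Tendsto (fun p => p.1 * Real.log p.1 * deriv (fun s => f s p.2) p.1)
      (𝓝[>] (0 : ℝ) ×ˢ l) (𝓝 0)) :
    ∃ ε > 0, ∀ᶠ μ in l, {s | s ∈ Ioo 0 ε ∧ f s μ = s ^ α μ}.Subsingleton := by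
  have hlogDeriv : Tendsto (fun p => p.1 * Real.log p.1 * logDeriv (fun s => f s p.2) p.1)
      (𝓝[>] (0 : ℝ) ×ˢ l) (𝓝 0) := by
    simpa only [logDeriv_apply, Pi.div_def, mul_div_assoc, zero_div] using hf'.div hf ha0
  obtain ⟨η, hη0, hη⟩ : ∃ η > 0, η < min 1 (|a - 1| / 2) :=
    exists_between (lt_min one_pos (half_pos (abs_pos.2 (sub_ne_zero.2 ha1))))
  obtain ⟨hη1, hηa⟩ := lt_min_iff.1 hη
  have hsmall : ∀ᶠ p in 𝓝[>] (0 : ℝ) ×ˢ l,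
      |p.1 * Real.log p.1 * logDeriv (fun s => f s p.2) p.1| < η := by
    simpa using hlogDeriv.abs.eventually_lt_const (by simpa using hη0)
  have hf1 : ∀ᶠ p in 𝓝[>] (0 : ℝ) ×ˢ l, 2 * η < |f p.1 p.2 - 1| :=
    (hf.sub_const 1).abs.eventually_const_lt (by linarith)
  have hlt1 : ∀ᶠ p in 𝓝[>] (0 : ℝ) ×ˢ l, p.1 < 1 :=
    (eventually_nhdsWithin_of_eventually_nhds (eventually_lt_nhds one_pos)).prod_inl l
  obtain ⟨⟨ε, V⟩, ⟨hε, hV⟩, h⟩ := ((nhdsGT_basis (0 : ℝ)).prod l.basis_sets).eventually_iff.1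
    (hlt1.and (hd.and ((hf.eventually_ne ha0).and (hsmall.and hf1))))
  refine ⟨ε, hε, mem_of_superset hV fun μ hμ => ?_⟩
  choose hlt hdiff hne hlog hfar using fun s (hs : s ∈ Ioo 0 ε) => h (x := (s, μ)) ⟨hs, hμ⟩
  exact subsingleton_setOf_eq_rpow (α μ) ordConnected_Ioo (fun s hs => ⟨hs.1, hlt s hs⟩) hη1.le
    hdiff hne (fun s hs => (hlog s hs).le) hfar

lemma mul_omegaComp (s α : ℝ) : α * omegaComp s α = s ^ (-α) - 1 := by
  unfold omegaComp
  split_ifs with h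
  · simp [h]
  · field_simp

lemma rpow_mul_omegaComp_eq_zero_iff {s : ℝ} (hs : 0 < s) (r A R : ℝ) :
    s ^ r * (A - 1 + (1 - r) * omegaComp s (r - 1) + R) = 0 ↔ A + R = s ^ (1 - r) := by
  have hω : (1 - r) * omegaComp s (r - 1) = 1 - s ^ (1 - r) := by
    have h := mul_omegaComp s (r - 1)
    rw [neg_sub] at h
    linear_combination -h
  rw [hω, mul_eq_zero, or_iff_right (Real.rpow_pos_of_pos hs r).ne']
  constructor <;> intro h <;> linear_combination h

lemma mixedDeriv_zero_right {N : ℕ} (n : ℕ) (ψ : ℝ → (Fin N → ℝ) → ℝ) :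
    mixedDeriv n 0 ψ = dS^[n] ψ := by
  have hfold : ∀ is : List (Fin N),
      is.foldr (fun i φ => (dMu i)^[(0 : Fin N → ℕ) i] φ) ψ = ψ := fun is => by
    induction is with
    | nil => rfl
    | cons _ _ ih => exact ih
  rw [mixedDeriv, hfold]

namespace MemF

variable {N : ℕ} {K : ℕ∞} {L : ℝ} {U : Set (Fin N → ℝ)} {μ0 : Fin N → ℝ}
  {ψ : ℝ → (Fin N → ℝ) → ℝ}

lemma mem_nhds (h : MemF K L U μ0 ψ) : U ∈ 𝓝 μ0 := by
  obtain ⟨V, hVU, hV, -⟩ := h.2 0 0 (by simp)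
  exact mem_of_superset hV hVU

lemma isBigO_iterate_dS (h : MemF K L U μ0 ψ) (n : ℕ) (hn : (n : ℕ∞) ≤ K) :
    (fun p : ℝ × (Fin N → ℝ) => dS^[n] ψ p.1 p.2)
      =O[𝓝[>] (0 : ℝ) ×ˢ 𝓝 μ0] fun p => p.1 ^ (L - n) := by
  obtain ⟨V, -, hV, C, -, s0, hs0, hbound⟩ := h.2 n 0 (by simpa using hn)
  refine IsBigO.of_bound C ?_
  filter_upwards [prod_mem_prod (Ioo_mem_nhdsGT hs0) hV] with p hp
  rw [Real.norm_eq_abs, Real.norm_of_nonneg (Real.rpow_nonneg hp.1.1.le _), ← mixedDeriv_zero_right]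
  exact hbound p.2 hp.2 p.1 hp.1

lemma tendsto_zero (h : MemF K L U μ0 ψ) (hL : 0 < L) :
    Tendsto (fun p : ℝ × (Fin N → ℝ) => ψ p.1 p.2) (𝓝[>] (0 : ℝ) ×ˢ 𝓝 μ0) (𝓝 0) := by
  have hpow : Tendsto (fun s : ℝ => s ^ L) (𝓝[>] 0) (𝓝 0) := by
    simpa [hL.ne'] using
      (Real.continuousAt_rpow_const 0 L (Or.inr hL.le)).tendsto.mono_left nhdsWithin_le_nhds
  refine (h.isBigO_iterate_dS 0 (by simp)).trans_tendsto ?_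
  simpa only [Nat.cast_zero, sub_zero, Function.comp_def] using hpow.comp tendsto_fst

lemma tendsto_mul_log_mul_deriv (h : MemF K L U μ0 ψ) (hK : 1 ≤ K) (hL : 0 < L) :
    Tendsto (fun p : ℝ × (Fin N → ℝ) => p.1 * Real.log p.1 * deriv (fun s => ψ s p.2) p.1)
      (𝓝[>] (0 : ℝ) ×ˢ 𝓝 μ0) (𝓝 0) := by
  have hderiv : (fun p : ℝ × (Fin N → ℝ) => deriv (fun s => ψ s p.2) p.1)
      =O[𝓝[>] (0 : ℝ) ×ˢ 𝓝 μ0] fun p => p.1 ^ (L - 1) := by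
    simpa [dS] using h.isBigO_iterate_dS 1 (by simpa using hK)
  refine ((isBigO_refl (fun p : ℝ × (Fin N → ℝ) => p.1 * Real.log p.1) _).mul
    hderiv).trans_tendsto ?_
  refine ((tendsto_log_mul_rpow_nhdsGT_zero hL).comp tendsto_fst).congr' ?_
  filter_upwards [prod_mem_prod self_mem_nhdsWithin univ_mem] with p hp
  have hp0 : p.1 ≠ 0 := ne_of_gt hp.1
  rw [Function.comp_apply, Real.rpow_sub_one hp0]
  field_simp

lemma eventually_differentiableAt (h : MemF K L U μ0 ψ) (hK : 1 ≤ K) :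
    ∀ᶠ p : ℝ × (Fin N → ℝ) in 𝓝[>] (0 : ℝ) ×ˢ 𝓝 μ0,
      DifferentiableAt ℝ (fun s => ψ s p.2) p.1 := by
  obtain ⟨ε, hε, hψ⟩ := h.1
  filter_upwards [prod_mem_prod (Ioo_mem_nhdsGT hε) h.mem_nhds] with p hp
  have hψd := hψ.differentiableOn (by exact_mod_cast (one_pos.trans_le hK).ne')
  have hcomp : DifferentiableOn ℝ (fun s => ψ s p.2) (Ioo 0 ε) :=
    hψd.comp (f := fun s => (s, p.2)) (by fun_prop) fun s hs => ⟨hs, hp.2⟩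
  exact hcomp.differentiableAt (isOpen_Ioo.mem_nhds hp.1)

end MemF

theorem displacement_at_most_one_zero_general {N : ℕ} {K : ℕ∞} (hK : 1 ≤ K)
    {U : Set (Fin N → ℝ)} {μ0 : Fin N → ℝ} (r : (Fin N → ℝ) → ℝ) {A : (Fin N → ℝ) → ℝ}
    (hA : ContinuousAt A μ0) (hA0 : A μ0 ≠ 0) (hA1 : A μ0 ≠ 1) {ℓ : ℝ} (hℓ : 0 < ℓ)
    {R : ℝ → (Fin N → ℝ) → ℝ} (hR : MemF K ℓ U μ0 R) :
    ∃ V ⊆ U, V ∈ 𝓝 μ0 ∧ ∃ ε > 0, ∀ μ ∈ V,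
      Set.Subsingleton {s : ℝ | s ∈ Set.Ioo 0 ε ∧
        s ^ r μ * (A μ - 1 + (1 - r μ) * omegaComp s (r μ - 1) + R s μ) = 0} := by
  obtain ⟨ε, hε, hsub⟩ := exists_eventually_subsingleton_setOf_eq_rpow (l := 𝓝 μ0)
    (f := fun s μ => A μ + R s μ) (fun μ => 1 - r μ) hA0 hA1
    ((hR.eventually_differentiableAt hK).mono fun _ hp => hp.const_add _)
    (by simpa using (hA.tendsto.comp tendsto_snd).add (hR.tendsto_zero hℓ))
    (by simpa only [deriv_const_add] using hR.tendsto_mul_log_mul_deriv hK hℓ)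
  refine ⟨U ∩ {μ | _}, inter_subset_left, inter_mem hR.mem_nhds hsub, ε, hε, fun μ hμ => ?_⟩
  exact hμ.2.anti fun s hs => ⟨hs.1, (rpow_mul_omegaComp_eq_zero_iff hs.1.1 _ _ _).1 hs.2⟩

/-- From the proof of Theorem A(c): one zero at most for the displacement map. -/
theorem displacement_at_most_one_zero {N : ℕ} (U : Set (Fin N → ℝ)) (hU : IsOpen U)
    (μ0 : Fin N → ℝ) (hμ0 : μ0 ∈ U)
    (r A : (Fin N → ℝ) → ℝ)
    (hr : ContDiffOn ℝ (⊤ : ℕ∞) r U) (hA : ContDiffOn ℝ (⊤ : ℕ∞) A U)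
    (hApos : ∀ μ ∈ U, 0 < A μ) (hrpos : ∀ μ ∈ U, 0 < r μ)
    (hr0 : r μ0 = 1) (hA0 : A μ0 ≠ 1)
    (ℓ : ℝ) (hℓ : ℓ ∈ Set.Ioo (0:ℝ) 1)
    (R : ℝ → (Fin N → ℝ) → ℝ) (hR : MemF (⊤ : ℕ∞) ℓ U μ0 R) :
    ∃ V ⊆ U, V ∈ 𝓝 μ0 ∧ ∃ ε > 0, ∀ μ ∈ V,
      Set.Subsingleton {s : ℝ | s ∈ Set.Ioo 0 ε ∧
        s ^ r μ * (A μ - 1 + (1 - r μ) * omegaComp s (r μ - 1) + R s μ) = 0} := by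
  exact displacement_at_most_one_zero_general le_top r
    (hA.continuousOn.continuousAt (hU.mem_nhds hμ0)) (hApos μ0 hμ0).ne' hA0 hℓ.1 hR
end

section
/- Let U ⊆ ℝ^N be open, μ0 ∈ U, and let r, A, Λ, 𝒜 ∈ C^∞(U) with r > 0, A > 0, Λ > 0, r(μ0) = 1, A(μ0) = 1, 0 < Λ(μ0) < 1 and 𝒜(μ0) ≠ 0. Let ℓ ∈ (Λ(μ0), min{2Λ(μ0), 1}), let R ∈ 𝓕^∞_ℓ(μ0), and define 𝒟(s;μ) = s^{r(μ)}·(A(μ) − s^{1−r(μ)} + 𝒜(μ)·s^{Λ(μ)} + R(s;μ)). Then there exist a neighborhood V ⊆ U of μ0 and ε > 0 such that for every μ ∈ V the function s ↦ 𝒟(s;μ) has at most two zeros in the interval (0, ε). -/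
/-!
Write `α = 1 - r`. Away from `s = 0`, the zeros of the displacement map are those of
`f = A - s ^ α + 𝒜 s ^ Λ + R`, and two derivation-division steps
`f' = s ^ (α - 1) g`, `g' = s ^ (Λ - α - 1) h` lead to
`h = 𝒜 Λ (Λ - α) + (1 - α) s ^ (1 - Λ) R' + s ^ (2 - Λ) R''`.
Since `R` is flat of an order `ℓ` exceeding `Λ(μ0)`, both remainder terms vanish in the limit
`(s, μ) → (0⁺, μ0)`, so `h` tends to `𝒜(μ0) Λ(μ0) ^ 2 ≠ 0`. Hence `h` has no zeros for small `s`
and `μ` near `μ0`, and each division step costs at most one zero by Rolle's theorem.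
-/

open Topology Filter Set

section ZeroCounting

lemma encard_le_encard_add_one_of_interleaved {α : Type*} [LinearOrder α] {S T : Set α}
    (h : ∀ x ∈ S, ∀ y ∈ S, x < y → ∃ z ∈ T, x < z ∧ z < y) :
    S.encard ≤ T.encard + 1 := by
  rcases T.finite_or_infinite with hT | hT
  · lift T to Finset α using hT
    by_contra! hlt
    obtain ⟨S', hS', hcard⟩ := exists_subset_encard_eq (Order.add_one_le_of_lt hlt)
    rw [encard_coe_eq_coe_finsetCard] at hcard
    lift S' to Finset α using finite_of_encard_eq_coe (k := T.card + 1 + 1) (mod_cast hcard)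
    have hle : S'.card ≤ T.card + 1 := Finset.card_le_of_interleaved fun x hx y hy hxy _ =>
      h x (hS' hx) y (hS' hy) hxy
    rw [encard_coe_eq_coe_finsetCard] at hcard
    norm_cast at hcard
    omega
  · simp [hT.encard_eq]

variable {I : Set ℝ} {f g u : ℝ → ℝ}

lemma encard_zeros_le_of_hasDerivAt_mul (hI : I.OrdConnected)
    (hf : ∀ x ∈ I, HasDerivAt f (u x * g x) x) (hu : ∀ x ∈ I, u x ≠ 0) :
    {x ∈ I | f x = 0}.encard ≤ {x ∈ I | g x = 0}.encard + 1 := by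
  refine encard_le_encard_add_one_of_interleaved ?_
  rintro x ⟨hx, hfx⟩ y ⟨hy, hfy⟩ hxy
  have hsub : Icc x y ⊆ I := hI.out hx hy
  obtain ⟨z, hz, hz0⟩ := exists_hasDerivAt_eq_zero hxy
    (fun t ht => (hf t (hsub ht)).continuousAt.continuousWithinAt) (hfx.trans hfy.symm)
    (fun t ht => hf t (hsub (Ioo_subset_Icc_self ht)))
  have hzI : z ∈ I := hsub (Ioo_subset_Icc_self hz)
  exact ⟨z, ⟨hzI, (mul_eq_zero.1 hz0).resolve_left (hu z hzI)⟩, hz⟩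

variable {ρ ρ' ρ'' : ℝ → ℝ} {a α k e : ℝ}

lemma hasDerivAt_const_sub_rpow_add_rpow_add {s d : ℝ} (hs : 0 < s)
    (hρ : HasDerivAt ρ d s) :
    HasDerivAt (fun s => a - s ^ α + k * s ^ e + ρ s)
      (s ^ (α - 1) * (-α + k * e * s ^ (e - α) + s ^ (1 - α) * d)) s := by
  have hrpow (p : ℝ) : HasDerivAt (· ^ p) (p * s ^ (p - 1)) s :=
    Real.hasDerivAt_rpow_const (Or.inl hs.ne')
  refine ((((hrpow α).const_sub a).add ((hrpow e).const_mul k)).add hρ).congr_deriv ?_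
  have hpow : s ^ (α - 1) * s ^ (e - α) = s ^ (e - 1) := by
    rw [← Real.rpow_add hs]; ring_nf
  have hone : s ^ (α - 1) * s ^ (1 - α) = 1 := by
    rw [← Real.rpow_add hs]; simp
  linear_combination -k * e * hpow - d * hone

lemma hasDerivAt_const_add_rpow_add_rpow_mul {s d : ℝ} (hs : 0 < s)
    (hρ : HasDerivAt ρ d s) :
    HasDerivAt (fun s => a + k * s ^ (e - α) + s ^ (1 - α) * ρ s)
      (s ^ (e - α - 1) *
        (k * (e - α) + ((1 - α) * (s ^ (1 - e) * ρ s) + s ^ (2 - e) * d))) s := by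
  have hrpow (p : ℝ) : HasDerivAt (· ^ p) (p * s ^ (p - 1)) s :=
    Real.hasDerivAt_rpow_const (Or.inl hs.ne')
  refine ((((hrpow (e - α)).const_mul k).const_add a).add
    ((hrpow (1 - α)).mul hρ)).congr_deriv ?_
  have hone : s ^ (e - α - 1) * s ^ (1 - e) = s ^ (1 - α - 1) := by
    rw [← Real.rpow_add hs]; ring_nf
  have htwo : s ^ (e - α - 1) * s ^ (2 - e) = s ^ (1 - α) := by
    rw [← Real.rpow_add hs]; ring_nf
  linear_combination -(1 - α) * ρ s * hone - d * htwo

lemma encard_zeros_const_sub_rpow_add_rpow_add_le_two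
    (hI : I.OrdConnected) (hpos : ∀ s ∈ I, 0 < s)
    (hρ : ∀ s ∈ I, HasDerivAt ρ (ρ' s) s) (hρ' : ∀ s ∈ I, HasDerivAt ρ' (ρ'' s) s)
    (hne : ∀ s ∈ I,
      k * e * (e - α) + ((1 - α) * (s ^ (1 - e) * ρ' s) + s ^ (2 - e) * ρ'' s) ≠ 0) :
    {s ∈ I | a - s ^ α + k * s ^ e + ρ s = 0}.encard ≤ 2 := by
  have hrpow_ne (p : ℝ) : ∀ s ∈ I, s ^ p ≠ 0 := fun s hs =>
    (Real.rpow_pos_of_pos (hpos s hs) p).ne'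
  have hnone : {s ∈ I | k * e * (e - α) +
      ((1 - α) * (s ^ (1 - e) * ρ' s) + s ^ (2 - e) * ρ'' s) = 0} = ∅ :=
    eq_empty_of_forall_notMem fun s hs => hne s hs.1 hs.2
  calc {s ∈ I | a - s ^ α + k * s ^ e + ρ s = 0}.encard
      ≤ {s ∈ I | -α + k * e * s ^ (e - α) + s ^ (1 - α) * ρ' s = 0}.encard + 1 :=
        encard_zeros_le_of_hasDerivAt_mul hI
          (fun s hs => hasDerivAt_const_sub_rpow_add_rpow_add (hpos s hs) (hρ s hs))
          (hrpow_ne (α - 1))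
    _ ≤ {s ∈ I | k * e * (e - α) +
          ((1 - α) * (s ^ (1 - e) * ρ' s) + s ^ (2 - e) * ρ'' s) = 0}.encard + 1 + 1 := by
        gcongr
        exact encard_zeros_le_of_hasDerivAt_mul hI
          (fun s hs => hasDerivAt_const_add_rpow_add_rpow_mul (hpos s hs) (hρ' s hs))
          (hrpow_ne (e - α - 1))
    _ = 2 := by rw [hnone, encard_empty, zero_add, one_add_one_eq_two]

end ZeroCounting

section UniformLimits

open Asymptotics

lemma exists_pos_eventually_forall_Ioo {M : Type*} {l : Filter M} {P : ℝ → M → Prop}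
    (h : ∀ᶠ p in 𝓝[>] (0 : ℝ) ×ˢ l, P p.1 p.2) :
    ∃ ε > 0, ∀ᶠ μ in l, ∀ s ∈ Ioo 0 ε, P s μ := by
  obtain ⟨p, hp, q, hq, hpq⟩ := eventually_prod_iff.1 h
  obtain ⟨ε, hε, hεp⟩ := mem_nhdsGT_iff_exists_Ioo_subset.1 hp
  exact ⟨ε, hε, hq.mono fun μ hμ s hs => hpq (hεp hs) hμ⟩

variable {ι : Type*} {F : Filter ι} {s e φ : ι → ℝ} {L e₀ : ℝ}

lemma tendsto_rpow_mul_zero_of_isBigO_rpow (hs : Tendsto s F (𝓝[>] 0))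
    (he : Tendsto e F (𝓝 e₀)) (hφ : φ =O[F] fun x => s x ^ L) (hL : 0 < e₀ + L) :
    Tendsto (fun x => s x ^ e x * φ x) F (𝓝 0) := by
  have hpow : Tendsto (fun x => s x ^ (e x + L)) F (𝓝 0) := by
    simpa [Real.zero_rpow hL.ne'] using
      (tendsto_nhds_of_tendsto_nhdsWithin hs).rpow (he.add_const L) (Or.inr hL)
  have hmul : (fun x => s x ^ e x * s x ^ L) =ᶠ[F] fun x => s x ^ (e x + L) := by
    filter_upwards [eventually_mem_of_tendsto_nhdsWithin hs] with x hx
    exact (Real.rpow_add hx _ _).symm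
  exact ((isBigO_refl _ F).mul hφ).trans_tendsto (hpow.congr' hmul.symm)

variable {α k ρ' ρ'' : ι → ℝ} {α₀ k₀ : ℝ}

lemma tendsto_mul_sub_add_rpow_mul_of_isBigO_rpow (hs : Tendsto s F (𝓝[>] 0))
    (hα : Tendsto α F (𝓝 α₀)) (hk : Tendsto k F (𝓝 k₀)) (he : Tendsto e F (𝓝 e₀))
    (hL : e₀ < L) (hρ' : ρ' =O[F] fun x => s x ^ (L - 1))
    (hρ'' : ρ'' =O[F] fun x => s x ^ (L - 2)) :
    Tendsto (fun x => k x * e x * (e x - α x) +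
        ((1 - α x) * (s x ^ (1 - e x) * ρ' x) + s x ^ (2 - e x) * ρ'' x))
      F (𝓝 (k₀ * e₀ * (e₀ - α₀))) := by
  have hone : Tendsto (fun x => s x ^ (1 - e x) * ρ' x) F (𝓝 0) :=
    tendsto_rpow_mul_zero_of_isBigO_rpow hs (he.const_sub 1) hρ' (by linarith)
  have htwo : Tendsto (fun x => s x ^ (2 - e x) * ρ'' x) F (𝓝 0) :=
    tendsto_rpow_mul_zero_of_isBigO_rpow hs (he.const_sub 2) hρ'' (by linarith)
  simpa using ((hk.mul he).mul (he.sub hα)).add (((hα.const_sub 1).mul hone).add htwo)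

end UniformLimits

section FlatFunctions

open Asymptotics

variable {N : ℕ} {K : ℕ∞} {L : ℝ} {U : Set (Fin N → ℝ)} {μ0 : Fin N → ℝ}
  {ψ : ℝ → (Fin N → ℝ) → ℝ} {n : ℕ}

lemma mixedDeriv_zero_eq_iterate_dS (n : ℕ) (ψ : ℝ → (Fin N → ℝ) → ℝ) :
    mixedDeriv n 0 ψ = dS^[n] ψ := by
  simp [mixedDeriv]

lemma iterate_dS_apply (n : ℕ) (ψ : ℝ → (Fin N → ℝ) → ℝ) (s : ℝ) (μ : Fin N → ℝ) :
    dS^[n] ψ s μ = iteratedDeriv n (ψ · μ) s := by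
  induction n generalizing s with
  | zero => simp
  | succ n ih => simp only [Function.iterate_succ_apply', dS, ih, iteratedDeriv_succ]

lemma MemF.isBigO_mixedDeriv {ν : Fin N → ℕ} (hψ : MemF K L U μ0 ψ)
    (hn : (↑(n + ∑ i, ν i) : ℕ∞) ≤ K) :
    (fun p : ℝ × (Fin N → ℝ) => mixedDeriv n ν ψ p.1 p.2) =O[𝓝[>] 0 ×ˢ 𝓝 μ0]
      fun p => p.1 ^ (L - n) := by
  obtain ⟨V, -, hV, C, -, s₀, hs₀, hbound⟩ := hψ.2 n ν hn
  refine IsBigO.of_bound C ?_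
  filter_upwards [prod_mem_prod (Ioo_mem_nhdsGT hs₀) hV] with p ⟨hs, hμ⟩
  rw [Real.norm_eq_abs, Real.norm_of_nonneg (Real.rpow_nonneg hs.1.le _)]
  exact hbound p.2 hμ p.1 hs

lemma MemF.isBigO_iterate_dS_s19 (hψ : MemF K L U μ0 ψ) (hn : (n : ℕ∞) ≤ K) :
    (fun p : ℝ × (Fin N → ℝ) => dS^[n] ψ p.1 p.2) =O[𝓝[>] 0 ×ˢ 𝓝 μ0]
      fun p => p.1 ^ (L - n) := by
  simpa only [mixedDeriv_zero_eq_iterate_dS] using hψ.isBigO_mixedDeriv (ν := 0) (by simpa using hn)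

lemma MemF.eventually_hasDerivAt_iterate_dS (hψ : MemF K L U μ0 ψ) (hU : U ∈ 𝓝 μ0)
    (hn : (n : ℕ∞) < K) :
    ∀ᶠ p in 𝓝[>] (0 : ℝ) ×ˢ 𝓝 μ0,
      HasDerivAt (dS^[n] ψ · p.2) (dS^[n + 1] ψ p.1 p.2) p.1 := by
  obtain ⟨ε, hε, hsmooth⟩ := hψ.1
  filter_upwards [prod_mem_prod (Ioo_mem_nhdsGT hε) hU] with p ⟨hs, hμ⟩
  have hslice : ContDiffAt ℝ K (ψ · p.2) p.1 :=
    (hsmooth.comp (f := fun s : ℝ => (s, p.2)) (contDiff_id.prodMk contDiff_const).contDiffOn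
      fun s hs => ⟨hs, hμ⟩).contDiffAt (Ioo_mem_nhds hs.1 hs.2)
  have hdiff : DifferentiableAt ℝ (iteratedDeriv n (ψ · p.2)) p.1 := by
    simpa only [iteratedDerivWithin_univ, differentiableWithinAt_univ] using
      hslice.contDiffWithinAt.differentiableWithinAt_iteratedDerivWithin (s := univ) (m := n)
        (by exact_mod_cast hn) (by simp)
  simpa only [iterate_dS_apply, iteratedDeriv_succ] using hdiff.hasDerivAt

end FlatFunctions

open Asymptotics in
theorem displacement_at_most_two_zeros_general {M : Type*} {l : Filter M}
    {r A Λ 𝒜 : M → ℝ} {R R' R'' : ℝ → M → ℝ} {r₀ Λ₀ 𝒜₀ ℓ : ℝ}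
    (hr : Tendsto r l (𝓝 r₀)) (hΛ : Tendsto Λ l (𝓝 Λ₀)) (h𝒜 : Tendsto 𝒜 l (𝓝 𝒜₀))
    (hΛ₀ : Λ₀ ≠ 0) (hΛr : Λ₀ ≠ 1 - r₀) (h𝒜₀ : 𝒜₀ ≠ 0) (hℓ : Λ₀ < ℓ)
    (hR : ∀ᶠ p in 𝓝[>] (0 : ℝ) ×ˢ l, HasDerivAt (R · p.2) (R' p.1 p.2) p.1)
    (hR' : ∀ᶠ p in 𝓝[>] (0 : ℝ) ×ˢ l, HasDerivAt (R' · p.2) (R'' p.1 p.2) p.1)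
    (hR'ℓ : (fun p : ℝ × M => R' p.1 p.2) =O[𝓝[>] 0 ×ˢ l] fun p => p.1 ^ (ℓ - 1))
    (hR''ℓ : (fun p : ℝ × M => R'' p.1 p.2) =O[𝓝[>] 0 ×ˢ l] fun p => p.1 ^ (ℓ - 2)) :
    ∃ ε > 0, ∀ᶠ μ in l,
      {s ∈ Ioo (0 : ℝ) ε |
        s ^ r μ * (A μ - s ^ (1 - r μ) + 𝒜 μ * s ^ Λ μ + R s μ) = 0}.encard ≤ 2 := by
  have hlim := tendsto_mul_sub_add_rpow_mul_of_isBigO_rpow tendsto_fst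
    ((hr.const_sub 1).comp tendsto_snd) (h𝒜.comp tendsto_snd) (hΛ.comp tendsto_snd) hℓ hR'ℓ hR''ℓ
  have hlim_ne : 𝒜₀ * Λ₀ * (Λ₀ - (1 - r₀)) ≠ 0 :=
    mul_ne_zero (mul_ne_zero h𝒜₀ hΛ₀) (sub_ne_zero.2 hΛr)
  obtain ⟨ε, hε, hev⟩ : ∃ ε > 0, ∀ᶠ μ in l, ∀ s ∈ Ioo 0 ε,
      HasDerivAt (R · μ) (R' s μ) s ∧ HasDerivAt (R' · μ) (R'' s μ) s ∧
      𝒜 μ * Λ μ * (Λ μ - (1 - r μ)) +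
        ((1 - (1 - r μ)) * (s ^ (1 - Λ μ) * R' s μ) + s ^ (2 - Λ μ) * R'' s μ) ≠ 0 :=
    exists_pos_eventually_forall_Ioo (hR.and (hR'.and (hlim.eventually_ne hlim_ne)))
  refine ⟨ε, hε, hev.mono fun μ hμ => ?_⟩
  refine (encard_le_encard ?_).trans (encard_zeros_const_sub_rpow_add_rpow_add_le_two
    (a := A μ) ordConnected_Ioo (fun s hs => hs.1) (fun s hs => (hμ s hs).1)
    (fun s hs => (hμ s hs).2.1) (fun s hs => (hμ s hs).2.2))
  rintro s ⟨hs, hzero⟩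
  exact ⟨hs, (mul_eq_zero.1 hzero).resolve_left (Real.rpow_pos_of_pos hs.1 _).ne'⟩

/-- From the proof of Theorem B(a): two zeros at most for the displacement map. -/
theorem displacement_at_most_two_zeros {N : ℕ} (U : Set (Fin N → ℝ)) (hU : IsOpen U)
    (μ0 : Fin N → ℝ) (hμ0 : μ0 ∈ U)
    (r A Λ 𝒜 : (Fin N → ℝ) → ℝ)
    (hr : ContDiffOn ℝ (⊤ : ℕ∞) r U) (hA : ContDiffOn ℝ (⊤ : ℕ∞) A U)
    (hΛ : ContDiffOn ℝ (⊤ : ℕ∞) Λ U) (h𝒜 : ContDiffOn ℝ (⊤ : ℕ∞) 𝒜 U)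
    (hrpos : ∀ μ ∈ U, 0 < r μ) (hApos : ∀ μ ∈ U, 0 < A μ)
    (hΛpos : ∀ μ ∈ U, 0 < Λ μ)
    (hr0 : r μ0 = 1) (hA0 : A μ0 = 1)
    (hΛ0 : 0 < Λ μ0 ∧ Λ μ0 < 1) (h𝒜0 : 𝒜 μ0 ≠ 0)
    (ℓ : ℝ) (hℓ : ℓ ∈ Set.Ioo (Λ μ0) (min (2 * Λ μ0) 1))
    (R : ℝ → (Fin N → ℝ) → ℝ) (hR : MemF (⊤ : ℕ∞) ℓ U μ0 R) :
    ∃ V ⊆ U, V ∈ 𝓝 μ0 ∧ ∃ ε > 0, ∀ μ ∈ V,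
      ∀ S : Finset ℝ,
        (∀ s ∈ S, s ∈ Set.Ioo (0:ℝ) ε ∧
          s ^ r μ * (A μ - s ^ (1 - r μ) + 𝒜 μ * s ^ Λ μ + R s μ) = 0) →
        S.card ≤ 2 := by
  have hUn : U ∈ 𝓝 μ0 := hU.mem_nhds hμ0
  obtain ⟨ε, hε, hev⟩ := displacement_at_most_two_zeros_general (A := A)
    (hr.continuousOn.continuousAt hUn) (hΛ.continuousOn.continuousAt hUn)
    (h𝒜.continuousOn.continuousAt hUn) hΛ0.1.ne' (by simpa [hr0] using hΛ0.1.ne') h𝒜0 hℓ.1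
    (hR.eventually_hasDerivAt_iterate_dS (n := 0) hUn (WithTop.coe_lt_top _))
    (hR.eventually_hasDerivAt_iterate_dS (n := 1) hUn (WithTop.coe_lt_top _))
    (mod_cast hR.isBigO_iterate_dS_s19 (n := 1) le_top) (mod_cast hR.isBigO_iterate_dS_s19 (n := 2) le_top)
  obtain ⟨V, hV, hcard⟩ := (hev.and hUn).exists_mem
  refine ⟨V, fun μ hμ => (hcard μ hμ).2, hV, ε, hε, fun μ hμ S hS => ?_⟩
  exact_mod_cast (encard_coe_eq_coe_finsetCard S).symm.trans_le
    ((encard_le_encard hS).trans (hcard μ hμ).1)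
end
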